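/- arXiv:1404.1182 — 4 statements merged into one kernel-verified Lean document; each statement's English description precedes it below -/
import Mathlib

section
/- There exists n₀ such that for every n ≥ n₀ the following holds: if H is any simple graph on n vertices with no isolated vertices and with maximum degree Δ(H) ≤ √n/200, then ex(n,H) = C(n−1,2) + δ(H) − 1, where δ(H) is the minimum degree of H. -/
/-- `G` contains a copy of `H`, i.e. a subgraph isomorphic to `H`: there is an
injection of the vertices of `H` into the vertices of `G` mapping edges to edges. -/
def ContainsCopy {α β : Type*} (G : SimpleGraph α) (H : SimpleGraph β) : Prop :=
  ∃ f : β → α, Function.Injective f ∧ ∀ u v : β, H.Adj u v → G.Adj (f u) (f v)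

/-- The extremal number `ex(n, H)`: the maximum number of edges in a simple graph on
`n` vertices containing no subgraph isomorphic to `H`. -/
noncomputable def exNum (n : ℕ) {β : Type*} (H : SimpleGraph β) : ℕ :=
  sSup {m | ∃ G : SimpleGraph (Fin n), ¬ ContainsCopy G H ∧ m = G.edgeSet.ncard}

open Finset

/-- A partial packing of `H` and `F`, conflict-free on `P` and leaving only vertices of degree
at most `t` in `F`, can be turned into a packing if the images of `P` have small total degree around every
vertex outside `P`: in a placement with fewest conflicts, no exchange of two images helps. -/
theorem exists_packing_of_partial {V : Type*} [Fintype V] [DecidableEq V] (H F : SimpleGraph V)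
    [DecidableRel H.Adj] [DecidableRel F.Adj] (f₀ : Equiv.Perm V) (P : Finset V) (D t : ℕ)
    (hD : ∀ v, H.degree v ≤ D) (ht : ∀ u ∉ P, F.degree (f₀ u) ≤ t)
    (hP : ∀ a ∈ P, ∀ b ∈ P, H.Adj a b → ¬ F.Adj (f₀ a) (f₀ b))
    (hload : ∀ u ∉ P, ∑ a ∈ H.neighborFinset u with a ∈ P, F.degree (f₀ a) + 2 * (D * t) + D + #P
      < Fintype.card V) :
    ∃ f : Equiv.Perm V, ∀ a b, H.Adj a b → ¬ F.Adj (f a) (f b) := by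
  classical
  let conflicts (f : Equiv.Perm V) : Finset (V × V) :=
    univ.filter fun p => H.Adj p.1 p.2 ∧ F.Adj (f p.1) (f p.2)
  obtain ⟨f, hf, hmin⟩ := exists_min_image
    (univ.filter fun f : Equiv.Perm V => ∀ a ∈ P, f a = f₀ a) (fun f => #(conflicts f))
    ⟨f₀, by simp⟩
  simp only [mem_filter, mem_univ, true_and] at hf hmin
  refine ⟨f, ?_⟩
  by_contra! hcon
  obtain ⟨u, z₀, huP, huz, hconf⟩ : ∃ u z, u ∉ P ∧ H.Adj u z ∧ F.Adj (f u) (f z) := by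
    obtain ⟨a, b, hab, hfab⟩ := hcon
    by_cases ha : a ∈ P
    · by_cases hb : b ∈ P
      · exact absurd (by rwa [hf a ha, hf b hb] at hfab) (hP a ha b hb hab)
      · exact ⟨b, a, hb, hab.symm, hfab.symm⟩
    · exact ⟨a, b, ha, hab, hfab⟩
  have htf : ∀ v ∉ P, F.degree (f v) ≤ t := by
    intro v hv
    have hw : f₀.symm (f v) ∉ P := by
      intro hmem
      have h1 := hf _ hmem
      rw [Equiv.apply_symm_apply] at h1
      exact hv (f.injective h1 ▸ hmem)
    have h2 := ht _ hw
    rwa [Equiv.apply_symm_apply] at h2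
  -- vertices that may not be exchanged with `u`
  let bad₁ : Finset V :=
    (H.neighborFinset u).biUnion fun z => (F.neighborFinset (f z)).map f.symm.toEmbedding
  let bad₂ : Finset V := (F.neighborFinset (f u)).biUnion fun y => H.neighborFinset (f.symm y)
  have hbad₁ : #bad₁ ≤ ∑ a ∈ H.neighborFinset u with a ∈ P, F.degree (f₀ a) + D * t := by
    calc #bad₁ ≤ ∑ z ∈ H.neighborFinset u, F.degree (f z) := by
          refine card_biUnion_le.trans (le_of_eq (sum_congr rfl fun z _ => ?_))
          simp
      _ = ∑ a ∈ H.neighborFinset u with a ∈ P, F.degree (f a)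
            + ∑ a ∈ H.neighborFinset u with a ∉ P, F.degree (f a) :=
          (sum_filter_add_sum_filter_not _ _ _).symm
      _ ≤ _ := by
          refine add_le_add (le_of_eq (sum_congr rfl fun a ha => ?_)) ?_
          · rw [hf a (mem_filter.1 ha).2]
          · refine (sum_le_card_nsmul _ _ t fun a ha => htf a (mem_filter.1 ha).2).trans ?_
            rw [smul_eq_mul]
            refine Nat.mul_le_mul_right t ((card_filter_le _ _).trans ?_)
            simpa using hD u
  have hbad₂ : #bad₂ ≤ D * t := by
    refine (card_biUnion_le_card_mul _ _ D fun y _ => by simpa using hD _).trans ?_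
    rw [mul_comm]
    exact Nat.mul_le_mul_left D (by simpa using htf u huP)
  obtain ⟨w, hw⟩ : ∃ w, w ∉ bad₁ ∪ bad₂ ∪ H.neighborFinset u ∪ P := by
    by_contra! hall
    have h1 : Fintype.card V ≤ #(bad₁ ∪ bad₂ ∪ H.neighborFinset u ∪ P) := by
      rw [← card_univ]; exact card_le_card fun x _ => hall x
    have h2 := card_union_le (bad₁ ∪ bad₂ ∪ H.neighborFinset u) P
    have h3 := card_union_le (bad₁ ∪ bad₂) (H.neighborFinset u)
    have h4 := card_union_le bad₁ bad₂
    have h5 := hD u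
    rw [← SimpleGraph.card_neighborFinset_eq_degree] at h5
    have h6 := hload u huP
    omega
  simp only [mem_union, not_or] at hw
  obtain ⟨⟨⟨hw₁, hw₂⟩, hwu⟩, hwP⟩ := hw
  rw [SimpleGraph.mem_neighborFinset] at hwu
  have hw₁' : ∀ z, H.Adj u z → ¬ F.Adj (f w) (f z) := by
    intro z hz hF
    exact hw₁ (by simpa [bad₁] using ⟨z, hz, hF.symm⟩)
  have hw₂' : ∀ z, H.Adj w z → ¬ F.Adj (f u) (f z) := by
    intro z hz hF
    exact hw₂ (by simpa [bad₂] using ⟨f z, hF, by simpa using hz.symm⟩)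
  have hwne : w ≠ u := by rintro rfl; exact hw₁' z₀ huz hconf
  let f' : Equiv.Perm V := (Equiv.swap u w).trans f
  have hf'u : f' u = f w := by simp [f']
  have hf'w : f' w = f u := by simp [f']
  have hf'o : ∀ a, a ≠ u → a ≠ w → f' a = f a := by
    intro a h1 h2; simp [f', Equiv.swap_apply_of_ne_of_ne h1 h2]
  have hnew : ∀ a, H.Adj u a → ¬ F.Adj (f' u) (f' a) := by
    intro a ha
    have h1 : a ≠ w := by rintro rfl; exact hwu ha
    rw [hf'u, hf'o a ha.ne' h1]
    exact hw₁' a ha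
  have hnew' : ∀ a, H.Adj w a → ¬ F.Adj (f' w) (f' a) := by
    intro a ha
    have h1 : a ≠ u := by rintro rfl; exact hwu ha.symm
    rw [hf'w, hf'o a h1 ha.ne']
    exact hw₂' a ha
  have hlt : #(conflicts f') < #(conflicts f) := by
    refine card_lt_card ((ssubset_iff_of_subset ?_).2 ⟨(u, z₀), ?_, ?_⟩)
    · rintro ⟨a, b⟩ hab
      simp only [conflicts, mem_filter, mem_univ, true_and] at hab ⊢
      obtain ⟨hH, hF⟩ := hab
      have h1 : a ≠ u := by rintro rfl; exact hnew b hH hF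
      have h2 : a ≠ w := by rintro rfl; exact hnew' b hH hF
      have h3 : b ≠ u := by rintro rfl; exact hnew a hH.symm hF.symm
      have h4 : b ≠ w := by rintro rfl; exact hnew' a hH.symm hF.symm
      rw [hf'o a h1 h2, hf'o b h3 h4] at hF
      exact ⟨hH, hF⟩
    · simp [conflicts, huz, hconf]
    · simpa [conflicts, huz] using hnew z₀ huz
  refine absurd (hmin f' fun a ha => ?_) hlt.not_ge
  rw [hf'o a (by rintro rfl; exact huP ha) (by rintro rfl; exact hwP ha), hf a ha]

/-- If `F` has at most `n - 1 - k` edges, then every vertex `v` has `k` pairwise non-adjacent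
non-neighbours of degree at most one. -/
theorem exists_indep_low_degree {V : Type*} [Fintype V] [LinearOrder V] (F : SimpleGraph V)
    [DecidableRel F.Adj] (v : V) (k : ℕ) (hk : #F.edgeFinset + k + 1 ≤ Fintype.card V) :
    ∃ W : Finset V, #W = k ∧ v ∉ W ∧ (∀ w ∈ W, ¬ F.Adj v w ∧ F.degree w ≤ 1) ∧
      ∀ a ∈ W, ∀ b ∈ W, ¬ F.Adj a b := by
  classical
  let N : Finset V := univ.filter fun x => ¬ F.Adj v x ∧ x ≠ v
  let M : Finset V := N.filter fun x => F.degree x ≤ 1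
  let W : Finset V := M.filter fun x => ∀ y ∈ M, F.Adj x y → x < y
  let Z : Finset V := W.filter fun x => F.degree x = 1
  have huniq : ∀ x ∈ M, ∀ y z, F.Adj x y → F.Adj x z → y = z := by
    intro x hx y z hy hz
    have := (mem_filter.1 hx).2
    rw [← SimpleGraph.card_neighborFinset_eq_degree, card_le_one] at this
    exact this y (by simpa using hy) z (by simpa using hz)
  have hMW : #(M \ W) ≤ #Z := by
    have hex : ∀ x ∈ M \ W, ∃ y ∈ M, F.Adj x y ∧ y < x := by
      intro x hx
      rw [mem_sdiff] at hx
      have h2 := hx.2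
      simp only [W, mem_filter, not_and, not_forall] at h2
      obtain ⟨y, hy, hxy, hlt⟩ := h2 hx.1
      exact ⟨y, hy, hxy, lt_of_le_of_ne (not_lt.1 hlt) hxy.ne'⟩
    choose! p hpM hpadj hplt using hex
    refine card_le_card_of_injOn p ?_ ?_
    · intro x hx
      have hx : x ∈ M \ W := hx
      have hM := hpM x hx
      simp only [Z, W, coe_filter, mem_filter, Set.mem_ofPred_eq]
      refine ⟨⟨hM, fun y _ hy => ?_⟩, ?_⟩
      · rw [huniq _ hM y x hy (hpadj x hx).symm]; exact hplt x hx
      · have h1 : F.degree (p x) ≤ 1 := (mem_filter.1 hM).2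
        have h2 : 0 < F.degree (p x) :=
          (F.degree_pos_iff_exists_adj _).2 ⟨x, (hpadj x hx).symm⟩
        omega
    · intro x hx y hy hxy
      have hx : x ∈ M \ W := hx
      have hy : y ∈ M \ W := hy
      refine huniq _ (hpM x hx) x y (hpadj x hx).symm ?_
      rw [hxy]; exact (hpadj y hy).symm
  -- degree sum over the non-neighbours of `v`
  have hNsum : ∑ x ∈ N, F.degree x + 2 * F.degree v ≤ 2 * #F.edgeFinset := by
    rw [← F.sum_degrees_eq_twice_card_edges]
    have h1 : F.degree v ≤ ∑ x ∈ F.neighborFinset v, F.degree x := by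
      rw [← SimpleGraph.card_neighborFinset_eq_degree, card_eq_sum_ones]
      refine sum_le_sum fun x hx => ?_
      exact (F.degree_pos_iff_exists_adj _).2 ⟨v, ((F.mem_neighborFinset _ _).1 hx).symm⟩
    have h2 : N ∪ (insert v (F.neighborFinset v)) = univ := by
      ext x; simp [N]; tauto
    have h3 : Disjoint N (insert v (F.neighborFinset v)) := by
      rw [disjoint_left]; intro x; simp [N]; tauto
    rw [← h2, sum_union h3, sum_insert (by simp)]
    omega
  have hNcard : #N + F.degree v + 1 = Fintype.card V := by
    have h2 : N ∪ (insert v (F.neighborFinset v)) = univ := by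
      ext x; simp [N]; tauto
    have h3 : Disjoint N (insert v (F.neighborFinset v)) := by
      rw [disjoint_left]; intro x; simp [N]; tauto
    rw [← card_univ, ← h2, card_union_of_disjoint h3, card_insert_of_notMem (by simp),
      SimpleGraph.card_neighborFinset_eq_degree]
    omega
  have hNlow : 2 * #N ≤ ∑ x ∈ N, F.degree x + 2 * #W := by
    have hMN : M ⊆ N := filter_subset _ _
    have hWM : W ⊆ M := filter_subset _ _
    have h1 : 2 * #(N \ M) ≤ ∑ x ∈ N \ M, F.degree x := by
      rw [mul_comm, ← smul_eq_mul]
      refine card_nsmul_le_sum _ _ _ fun x hx => ?_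
      rw [mem_sdiff, mem_filter] at hx
      have := hx.2
      grind
    have h2 : #(M \ W) ≤ ∑ x ∈ M \ W, F.degree x := by
      rw [card_eq_sum_ones]
      refine sum_le_sum fun x hx => ?_
      rw [mem_sdiff] at hx
      have h2 := hx.2
      simp only [W, mem_filter, not_and, not_forall] at h2
      obtain ⟨y, hy, hxy, hlt⟩ := h2 hx.1
      exact (F.degree_pos_iff_exists_adj _).2 ⟨y, hxy⟩
    have h3 : #Z ≤ ∑ x ∈ W, F.degree x := by
      rw [card_eq_sum_ones]
      refine (sum_le_sum fun x hx => ?_).trans (sum_le_sum_of_subset (filter_subset _ _))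
      exact (mem_filter.1 hx).2.ge
    have h4 := card_sdiff_add_card_eq_card hMN
    have h5 := card_sdiff_add_card_eq_card hWM
    have h6 := sum_sdiff (f := fun x => F.degree x) hMN
    have h7 := sum_sdiff (f := fun x => F.degree x) hWM
    omega
  obtain ⟨W', hW', hcard⟩ := exists_subset_card_eq (s := W) (n := k) (by omega)
  refine ⟨W', hcard, fun h => ?_, fun w hw => ?_, fun a ha b hb hab => ?_⟩
  · have := hW' h
    simp [W, M, N] at this
  · have := hW' hw
    simp only [W, M, N, mem_filter] at this
    exact ⟨this.1.1.2.1, this.1.2⟩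
  · have h1 := mem_filter.1 (hW' ha)
    have h2 := mem_filter.1 (hW' hb)
    exact lt_asymm (h1.2 b h2.1 hab) (h2.2 a h1.1 hab.symm)

/-- Greedy placement of the elements of `B` on pairwise non-adjacent vertices outside `X`, keeping
the exponential potential `∑ u, exp (weight placed around u)` under control. -/
theorem exists_spread_placement {V ι : Type*} [Fintype V] [DecidableEq V] [DecidableEq ι]
    (H : SimpleGraph V) [DecidableRel H.Adj] (D : ℕ) (hD : ∀ v, H.degree v ≤ D)
    (X : Finset V) (top : ι → Prop) [DecidablePred top] (w c : ι → ℝ) (hw : ∀ s, 0 ≤ w s)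
    (hc : ∀ s, (Real.exp (w s) - 1) * (2 * D) ≤ c s * Fintype.card V) (hV : 0 < Fintype.card V)
    (B : Finset ι)
    (hB : 2 * (#X + #B * (D + 1) + #(B.filter top) * (D * D)) ≤ Fintype.card V) :
    ∃ g : ι → V, Set.InjOn g B ∧ (∀ s ∈ B, g s ∉ X) ∧
      (∀ s ∈ B, ∀ s' ∈ B, ¬ H.Adj (g s) (g s')) ∧
      (∀ s ∈ B, ∀ s' ∈ B, top s → top s' → s ≠ s' → ∀ u, H.Adj u (g s) → ¬ H.Adj u (g s')) ∧
      ∑ u, Real.exp (∑ s ∈ B with H.Adj u (g s), w s) ≤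
        Fintype.card V * Real.exp (∑ s ∈ B, c s) := by
  classical
  induction B using Finset.induction_on with
  | empty =>
    obtain ⟨v⟩ := Fintype.card_pos_iff.1 hV
    exact ⟨fun _ => v, by simp, by simp, by simp, by simp, by simp⟩
  | insert b B hb ih =>
    have hB' : 2 * (#X + #B * (D + 1) + #(B.filter top) * (D * D)) ≤ Fintype.card V := by
      refine le_trans ?_ hB
      gcongr <;> exact subset_insert _ _
    obtain ⟨g, hinj, hX, hadj, htop, hsum⟩ := ih hB'
    let closedNbhd (s : ι) : Finset V := insert (g s) (H.neighborFinset (g s))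
    let far (s : ι) : Finset V := (H.neighborFinset (g s)).biUnion fun u => H.neighborFinset u
    let bad : Finset V := X ∪ B.biUnion closedNbhd ∪ (B.filter top).biUnion far
    have hbad : #bad ≤ #X + #B * (D + 1) + #(B.filter top) * (D * D) := by
      refine (card_union_le _ _).trans (add_le_add ((card_union_le _ _).trans
        (add_le_add le_rfl ?_)) ?_)
      · refine card_biUnion_le_card_mul _ _ _ fun s _ => (card_insert_le _ _).trans ?_
        simpa using hD _
      · refine card_biUnion_le_card_mul _ _ _ fun s _ =>
          (card_biUnion_le_card_mul _ _ D fun u _ => by simpa using hD u).trans ?_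
        exact Nat.mul_le_mul_right D (by simpa using hD _)
    have hgood : Fintype.card V ≤ 2 * #badᶜ := by
      have h1 := card_add_card_compl bad
      omega
    let φ (u : V) : ℝ := Real.exp (∑ s ∈ B with H.Adj u (g s), w s)
    have hφ : ∀ u, 0 ≤ φ u := fun u => (Real.exp_pos _).le
    obtain ⟨h, hh, hhle⟩ : ∃ h ∈ badᶜ, ∑ u ∈ H.neighborFinset h, φ u ≤
        2 * D * (∑ u, φ u) / Fintype.card V := by
      by_contra! hcon
      have hne : (badᶜ).Nonempty := by
        rw [← card_pos]; omega
      have h1 := sum_lt_sum_of_nonempty hne hcon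
      rw [sum_const, nsmul_eq_mul] at h1
      have h2 : ∑ h ∈ badᶜ, ∑ u ∈ H.neighborFinset h, φ u ≤ D * ∑ u, φ u := by
        calc ∑ h ∈ badᶜ, ∑ u ∈ H.neighborFinset h, φ u
            ≤ ∑ h, ∑ u ∈ H.neighborFinset h, φ u :=
              sum_le_sum_of_subset_of_nonneg (subset_univ _)
                fun h _ _ => sum_nonneg fun u _ => hφ u
          _ = ∑ u, ∑ h ∈ H.neighborFinset u, φ u := by
              refine sum_comm' ?_
              intro x y; simp [H.adj_comm]
          _ ≤ ∑ u, D * φ u := by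
              refine sum_le_sum fun u _ => ?_
              rw [sum_const, nsmul_eq_mul]
              refine mul_le_mul_of_nonneg_right ?_ (hφ u)
              simpa using hD u
          _ = _ := by rw [mul_sum]
      have h3 : (Fintype.card V : ℝ) ≤ 2 * #badᶜ := by exact_mod_cast hgood
      have h4 : (0 : ℝ) < Fintype.card V := by exact_mod_cast hV
      have h5 : 0 ≤ D * ∑ u, φ u := mul_nonneg (Nat.cast_nonneg _) (sum_nonneg fun u _ => hφ u)
      have h6 : D * ∑ u, φ u ≤ #badᶜ * (2 * D * (∑ u, φ u) / Fintype.card V) := by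
        rw [mul_div_assoc', le_div_iff₀ h4]
        nlinarith
      linarith
    simp only [bad, mem_compl, mem_union, mem_biUnion, not_or, not_exists, not_and] at hh
    obtain ⟨⟨hhX, hhB⟩, hhT⟩ := hh
    have hhB' : ∀ s ∈ B, h ≠ g s ∧ ¬ H.Adj (g s) h := by
      intro s hs
      simpa [closedNbhd, not_or] using hhB s hs
    have hhT' : ∀ s ∈ B, top s → ∀ u, H.Adj u (g s) → ¬ H.Adj u h := by
      intro s hs ht u hu hu'
      refine hhT s (mem_filter.2 ⟨hs, ht⟩) ?_
      simp only [far, mem_biUnion, SimpleGraph.mem_neighborFinset]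
      exact ⟨u, hu.symm, hu'⟩
    let g' : ι → V := Function.update g b h
    have hg'b : g' b = h := by simp [g']
    have hg's : ∀ s ∈ B, g' s = g s := by
      intro s hs
      have : s ≠ b := by rintro rfl; exact hb hs
      simp [g', this]
    refine ⟨g', ?_, ?_, ?_, ?_, ?_⟩
    · intro s hs s' hs' hss
      simp only [coe_insert, Set.mem_insert_iff, mem_coe] at hs hs'
      rcases hs with rfl | hs <;> rcases hs' with rfl | hs'
      · rfl
      · rw [hg'b, hg's _ hs'] at hss; exact absurd hss (hhB' _ hs').1
      · rw [hg'b, hg's _ hs] at hss; exact absurd hss.symm (hhB' _ hs).1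
      · rw [hg's _ hs, hg's _ hs'] at hss; exact hinj hs hs' hss
    · intro s hs
      rcases mem_insert.1 hs with rfl | hs
      · rwa [hg'b]
      · rw [hg's s hs]; exact hX s hs
    · intro s hs s' hs'
      rw [mem_insert] at hs hs'
      rcases hs with rfl | hs <;> rcases hs' with rfl | hs'
      · simp
      · rw [hg'b, hg's _ hs']; exact fun hA => (hhB' _ hs').2 hA.symm
      · rw [hg'b, hg's _ hs]; exact (hhB' _ hs).2
      · rw [hg's _ hs, hg's _ hs']; exact hadj s hs s' hs'
    · intro s hs s' hs' ht ht' hne u hu hu'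
      rw [mem_insert] at hs hs'
      rcases hs with rfl | hs <;> rcases hs' with rfl | hs'
      · exact hne rfl
      · rw [hg'b] at hu; rw [hg's _ hs'] at hu'; exact hhT' s' hs' ht' u hu' hu
      · rw [hg'b] at hu'; rw [hg's _ hs] at hu; exact hhT' s hs ht u hu hu'
      · rw [hg's _ hs] at hu; rw [hg's _ hs'] at hu'; exact htop s hs s' hs' ht ht' hne u hu hu'
    · have hterm : ∀ u, Real.exp (∑ s ∈ insert b B with H.Adj u (g' s), w s) =
          φ u + if u ∈ H.neighborFinset h then (Real.exp (w b) - 1) * φ u else 0 := by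
        intro u
        have hfil : B.filter (fun s => H.Adj u (g' s)) = B.filter (fun s => H.Adj u (g s)) :=
          filter_congr fun s hs => by rw [hg's s hs]
        rw [filter_insert, hg'b, hfil]
        simp only [SimpleGraph.mem_neighborFinset, H.adj_comm h u]
        split_ifs with hu
        · rw [sum_insert (by simp [hb]), Real.exp_add]; simp only [φ]; ring
        · simp [φ]
      simp_rw [hterm]
      rw [sum_add_distrib, sum_ite_mem, univ_inter, ← mul_sum, sum_insert hb, Real.exp_add]
      have h4 : (0 : ℝ) < Fintype.card V := by exact_mod_cast hV
      have h5 : 0 ≤ Real.exp (w b) - 1 := by linarith [Real.one_le_exp (hw b)]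
      have hΦ : 0 ≤ ∑ u, φ u := sum_nonneg fun u _ => hφ u
      calc ∑ u, φ u + (Real.exp (w b) - 1) * ∑ u ∈ H.neighborFinset h, φ u
          ≤ ∑ u, φ u + (Real.exp (w b) - 1) * (2 * D * (∑ u, φ u) / Fintype.card V) := by gcongr
        _ = ∑ u, φ u + ((Real.exp (w b) - 1) * (2 * D)) / Fintype.card V * ∑ u, φ u := by ring
        _ ≤ ∑ u, φ u + c b * ∑ u, φ u := by
            gcongr
            rw [div_le_iff₀ h4]; exact hc b
        _ = (c b + 1) * ∑ u, φ u := by ring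
        _ ≤ Real.exp (c b) * ∑ u, φ u := by gcongr; exact Real.add_one_le_exp _
        _ ≤ Real.exp (c b) * (Fintype.card V * Real.exp (∑ s ∈ B, c s)) := by gcongr
        _ = _ := by ring

theorem degree_add_degree_le_card_edgeFinset_add_one {V : Type*} [Fintype V] [DecidableEq V]
    (F : SimpleGraph V) [DecidableRel F.Adj] {a b : V} (hab : a ≠ b) :
    F.degree a + F.degree b ≤ #F.edgeFinset + 1 := by
  rw [← F.card_incidenceFinset_eq_degree a, ← F.card_incidenceFinset_eq_degree b,
    ← card_union_add_card_inter]
  refine add_le_add (card_le_card (union_subset (F.incidenceFinset_subset a)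
    (F.incidenceFinset_subset b))) ?_
  rw [← card_singleton s(a, b)]
  refine card_le_card fun e he => ?_
  rw [mem_inter, SimpleGraph.mem_incidenceFinset, SimpleGraph.mem_incidenceFinset] at he
  exact mem_singleton.2 (F.incidenceSet_inter_incidenceSet_subset hab he)

theorem exp_sub_one_le_mul_exp (x : ℝ) : Real.exp x - 1 ≤ x * Real.exp x := by
  have h := Real.add_one_le_exp (-x)
  have h2 : Real.exp x * Real.exp (-x) = 1 := by rw [← Real.exp_add]; simp
  nlinarith [Real.exp_pos x]

theorem mul_exp_log_le {n D : ℝ} (hn : 1 ≤ n) (hDn : 40000 * D ^ 2 ≤ n) :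
    80 * D * Real.exp (Real.log n / 5) * Real.log n ≤ n := by
  set L := Real.log n with hL
  have hL0 : 0 ≤ L := Real.log_nonneg hn
  have hn' : n = Real.exp L := (Real.exp_log (by linarith)).symm
  have h1 : n = Real.exp (L / 2) ^ 2 := by rw [hn', ← Real.exp_nat_mul]; congr 1; push_cast; ring
  have h2 : 200 * D ≤ Real.exp (L / 2) := by
    refine le_of_sq_le_sq ?_ (Real.exp_pos _).le
    nlinarith
  have h3 := Real.quadratic_le_exp_of_nonneg (x := 3 / 10 * L) (by positivity)
  have h4 : L ≤ 5 / 2 * Real.exp (3 / 10 * L) := by nlinarith [sq_nonneg (L - 1)]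
  calc 80 * D * Real.exp (L / 5) * L
      = 2 / 5 * (200 * D) * Real.exp (L / 5) * L := by ring
    _ ≤ 2 / 5 * Real.exp (L / 2) * Real.exp (L / 5) * (5 / 2 * Real.exp (3 / 10 * L)) := by gcongr
    _ = Real.exp (L / 2) * Real.exp (L / 5) * Real.exp (3 / 10 * L) := by ring
    _ = n := by
      rw [← Real.exp_add, ← Real.exp_add, hn']; congr 1; ring

/-- A spread placement of the vertices of large degree: the vertices of degree more than `n / 100`
have disjoint neighbourhoods, and the total degree of the others around each vertex is small. -/
theorem exists_balanced_placement {V : Type*} [Fintype V] [DecidableEq V]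
    (H : SimpleGraph V) [DecidableRel H.Adj] (D : ℕ) (hD0 : 0 < D) (hD : ∀ v, H.degree v ≤ D)
    (hn : 40000 * D ^ 2 ≤ Fintype.card V) (X B : Finset V) (d : V → ℕ)
    (hX : #X ≤ (D + 1) ^ 2) (hB : ∀ s ∈ B, Fintype.card V ≤ 20 * D * d s)
    (hhalf : ∀ s ∈ B, 2 * d s ≤ Fintype.card V)
    (hsum : ∑ s ∈ B, d s ≤ 2 * Fintype.card V) :
    ∃ g : V → V, Set.InjOn g B ∧ (∀ s ∈ B, g s ∉ X) ∧
      (∀ s ∈ B, ∀ s' ∈ B, ¬ H.Adj (g s) (g s')) ∧ #B ≤ 40 * D ∧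
      ∀ u, 10 * ∑ s ∈ B with H.Adj u (g s), d s ≤ 6 * Fintype.card V := by
  classical
  set n := Fintype.card V with hndef
  have hn0 : 40000 ≤ n := by nlinarith
  have hBcard : #B ≤ 40 * D := by
    have h1 : #B * n ≤ ∑ s ∈ B, 20 * D * d s := by
      rw [← smul_eq_mul]; exact card_nsmul_le_sum _ _ _ hB
    rw [← mul_sum] at h1
    have h2 : #B * n ≤ (40 * D) * n := by nlinarith
    exact Nat.le_of_mul_le_mul_right h2 (by omega)
  let top : V → Prop := fun s => n < 100 * d s
  have hTcard : #(B.filter top) ≤ 200 := by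
    have h1 : #(B.filter top) * n ≤ ∑ s ∈ B.filter top, 100 * d s := by
      rw [← smul_eq_mul]
      exact card_nsmul_le_sum _ _ _ fun s hs => (mem_filter.1 hs).2.le
    have h3 : ∑ s ∈ B.filter top, 100 * d s ≤ ∑ s ∈ B, 100 * d s :=
      sum_le_sum_of_subset (filter_subset _ _)
    rw [← mul_sum B] at h3
    have h2 : #(B.filter top) * n ≤ 200 * n := by omega
    exact Nat.le_of_mul_le_mul_right h2 (by omega)
  have hnR : (40000 : ℝ) ≤ n := by exact_mod_cast hn0
  have hnpos : (0 : ℝ) < n := by linarith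
  set L := Real.log n with hL
  have hL1 : 1 ≤ L := by
    rw [hL, Real.le_log_iff_exp_le hnpos]
    linarith [Real.exp_one_lt_d9]
  let w (s : V) : ℝ := if top s then 0 else 20 * L / n * d s
  let K : ℝ := Real.exp (L / 5) * (2 * D) / n
  have hK : 0 ≤ K := by positivity
  have hw0 : ∀ s, 0 ≤ w s := by
    intro s; simp only [w]; split_ifs
    · rfl
    · positivity
  have hwL : ∀ s, w s ≤ L / 5 := by
    intro s; simp only [w]; split_ifs with h
    · positivity
    · have h1 : 100 * (d s : ℝ) ≤ n := by exact_mod_cast not_lt.1 h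
      rw [div_mul_eq_mul_div, div_le_iff₀ hnpos]
      nlinarith
  have hwd : ∀ s, w s ≤ 20 * L / n * d s := by
    intro s; simp only [w]; split_ifs
    · positivity
    · rfl
  obtain ⟨g, hinj, hgX, hadj, htop, hpot⟩ := exists_spread_placement H D hD X top w
    (fun s => w s * K) hw0 (by
      intro s
      have h1 := exp_sub_one_le_mul_exp (w s)
      have h2 : Real.exp (w s) ≤ Real.exp (L / 5) := Real.exp_le_exp.2 (hwL s)
      calc (Real.exp (w s) - 1) * (2 * D) ≤ (w s * Real.exp (L / 5)) * (2 * D) := by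
            gcongr
            exact h1.trans (mul_le_mul_of_nonneg_left h2 (hw0 s))
        _ = w s * K * n := by simp only [K]; field_simp) (by omega) B (by nlinarith)
  refine ⟨g, hinj, hgX, hadj, hBcard, fun u => ?_⟩
  have hcsum : ∑ s ∈ B, w s * K ≤ 1 := by
    have h1 : ∑ s ∈ B, w s ≤ 40 * L := by
      calc ∑ s ∈ B, w s ≤ ∑ s ∈ B, 20 * L / n * (d s : ℝ) := sum_le_sum fun s _ => hwd s
        _ = 20 * L / n * ((∑ s ∈ B, d s : ℕ) : ℝ) := by rw [← mul_sum]; push_cast; rfl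
        _ ≤ 20 * L / n * ((2 * n : ℕ) : ℝ) := by gcongr
        _ = 40 * L := by push_cast; field_simp; ring
    rw [← sum_mul]
    have h2 := mul_exp_log_le (n := n) (D := D) (by linarith)
      (by exact_mod_cast hn)
    calc (∑ s ∈ B, w s) * K ≤ 40 * L * K := by gcongr
      _ = (80 * D * Real.exp (L / 5) * L) / n := by simp only [K]; ring
      _ ≤ 1 := by rw [div_le_one hnpos]; exact h2
  have hload : ∑ s ∈ B with H.Adj u (g s), w s ≤ 2 * L := by
    rw [← Real.exp_le_exp]
    calc Real.exp (∑ s ∈ B with H.Adj u (g s), w s)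
        ≤ ∑ u, Real.exp (∑ s ∈ B with H.Adj u (g s), w s) :=
          single_le_sum (f := fun u => Real.exp (∑ s ∈ B with H.Adj u (g s), w s))
            (fun _ _ => (Real.exp_pos _).le) (mem_univ u)
      _ ≤ n * Real.exp (∑ s ∈ B, w s * K) := hpot
      _ ≤ n * Real.exp L := by gcongr; linarith
      _ = Real.exp (2 * L) := by
        rw [two_mul, Real.exp_add, Real.exp_log hnpos]
  have hmed : 10 * ∑ s ∈ B.filter (fun s => H.Adj u (g s)) with ¬ top s, d s ≤ n := by
    have h1 : ∑ s ∈ B.filter (fun s => H.Adj u (g s)), w s =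
        20 * L / n * ((∑ s ∈ B.filter (fun s => H.Adj u (g s)) with ¬ top s, d s : ℕ) : ℝ) := by
      push_cast
      rw [mul_sum, sum_filter (p := fun s => ¬ top s)]
      refine sum_congr rfl fun s _ => ?_
      simp only [w]; split_ifs <;> simp_all
    rw [h1, div_mul_eq_mul_div, div_le_iff₀ hnpos] at hload
    have h2 : (10 : ℝ) * ((∑ s ∈ B.filter (fun s => H.Adj u (g s)) with ¬ top s, d s : ℕ) : ℝ)
        ≤ n := by
      refine le_of_mul_le_mul_left (a := 2 * L) ?_ (by positivity)
      linarith
    exact_mod_cast h2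
  have hbig : 2 * ∑ s ∈ B.filter (fun s => H.Adj u (g s)) with top s, d s ≤ n := by
    have h1 : #((B.filter (fun s => H.Adj u (g s))).filter top) ≤ 1 := by
      rw [card_le_one]
      intro a ha b hb
      simp only [mem_filter] at ha hb
      by_contra hne
      exact htop a ha.1.1 b hb.1.1 ha.2 hb.2 hne u ha.1.2 hb.1.2
    rw [mul_sum]
    refine (sum_le_card_nsmul _ _ n fun s hs => ?_).trans ?_
    · simp only [mem_filter] at hs
      exact hhalf s hs.1.1
    · rw [smul_eq_mul]; nlinarith
  have := sum_filter_add_sum_filter_not (B.filter (fun s => H.Adj u (g s))) top d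
  omega

/-- A graph `H` of maximum degree at most `√n / 200` packs with every graph `F` having at most
`n - 1 - deg h₁` edges. -/
theorem exists_packing {V : Type*} [Fintype V] [LinearOrder V] (H F : SimpleGraph V)
    [DecidableRel H.Adj] [DecidableRel F.Adj] (D : ℕ) (hD0 : 0 < D) (hD : ∀ v, H.degree v ≤ D)
    (hn : 40000 * D ^ 2 ≤ Fintype.card V) (h₁ : V)
    (hF : #F.edgeFinset + H.degree h₁ + 1 ≤ Fintype.card V) :
    ∃ f : Equiv.Perm V, ∀ a b, H.Adj a b → ¬ F.Adj (f a) (f b) := by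
  classical
  set n := Fintype.card V with hndef
  have hn0 : 40000 ≤ n := by nlinarith
  obtain ⟨v₁, -, hv₁⟩ := exists_max_image univ (fun v => F.degree v) ⟨h₁, mem_univ _⟩
  have hhalf : ∀ v, v ≠ v₁ → 2 * F.degree v ≤ n := by
    intro v hv
    have h1 := degree_add_degree_le_card_edgeFinset_add_one F hv
    have h2 := hv₁ v (mem_univ _)
    omega
  obtain ⟨W, hWcard, hvW, hWdeg, hWind⟩ := exists_indep_low_degree F v₁ (H.degree h₁) hF
  let t := n / (20 * D)
  have ht1 : 1 ≤ t := by
    rw [Nat.one_le_div_iff (by positivity)]; nlinarith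
  let B : Finset V := univ.filter fun v => v ≠ v₁ ∧ t < F.degree v
  have hWB : ∀ s ∈ W, s ∉ B := by
    intro s hs hsB
    have h1 := (hWdeg s hs).2
    have h2 := (mem_filter.1 hsB).2.2
    omega
  let A : Finset V := insert h₁ (H.neighborFinset h₁)
  let X : Finset V := A ∪ A.biUnion fun a => H.neighborFinset a
  have hAcard : #A ≤ D + 1 := (card_insert_le _ _).trans (by simpa using hD h₁)
  have hXcard : #X ≤ (D + 1) ^ 2 := by
    have h1 := card_union_le A (A.biUnion fun a => H.neighborFinset a)
    have h2 : #(A.biUnion fun a => H.neighborFinset a) ≤ #A * D :=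
      card_biUnion_le_card_mul _ _ _ fun a _ => by simpa using hD a
    have h3 : #A + #A * D ≤ (D + 1) ^ 2 := by nlinarith
    exact h1.trans (by omega)
  obtain ⟨g, hginj, hgX, hgadj, hBcard, hgload⟩ := exists_balanced_placement H D hD0 hD hn X B
    (fun s => F.degree s) hXcard (fun s hs => by
      have h1 : t + 1 ≤ F.degree s := (mem_filter.1 hs).2.2
      have h2 : n < 20 * D * (t + 1) := Nat.lt_mul_div_succ n (by positivity)
      exact h2.le.trans (Nat.mul_le_mul_left _ h1))
    (fun s hs => hhalf s (mem_filter.1 hs).2.1) (by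
      refine (sum_le_sum_of_subset (subset_univ B)).trans ?_
      rw [F.sum_degrees_eq_twice_card_edges]
      omega)
  obtain ⟨p, hp⟩ : ∃ p : V → V, Set.BijOn p W (H.neighborFinset h₁) := by
    have : Nonempty V := ⟨h₁⟩
    refine W.finite_toSet.exists_bijOn_of_encard_eq ?_
    rw [Set.encard_coe_eq_coe_finsetCard, Set.encard_coe_eq_coe_finsetCard, hWcard,
      SimpleGraph.card_neighborFinset_eq_degree]
  let q (s : V) : V := if s = v₁ then h₁ else if s ∈ W then p s else g s
  have hqv : q v₁ = h₁ := by simp [q]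
  have hqW : ∀ s ∈ W, q s = p s := by
    intro s hs
    have : s ≠ v₁ := by rintro rfl; exact hvW hs
    simp [q, this, hs]
  have hqB : ∀ s ∈ B, q s = g s := by
    intro s hs
    have h1 : s ≠ v₁ := (mem_filter.1 hs).2.1
    have h2 : s ∉ W := fun h => hWB s h hs
    simp [q, h1, h2]
  have hqWN : ∀ s ∈ W, H.Adj h₁ (q s) := by
    intro s hs
    rw [hqW s hs]
    simpa using hp.mapsTo hs
  have hqA : ∀ s, s = v₁ ∨ s ∈ W → q s ∈ A := by
    rintro s (rfl | hs)
    · rw [hqv]; exact mem_insert_self _ _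
    · exact mem_insert_of_mem (by simpa using hqWN s hs)
  have hqBA : ∀ s ∈ B, q s ∉ A := by
    intro s hs hA
    rw [hqB s hs] at hA
    exact hgX s hs (mem_union_left _ hA)
  have hqBadj : ∀ s ∈ B, ∀ a ∈ A, ¬ H.Adj a (q s) := by
    intro s hs a ha hadj
    rw [hqB s hs] at hadj
    exact hgX s hs (mem_union_right _ (mem_biUnion.2 ⟨a, ha, by simpa using hadj⟩))
  let Q : Finset V := insert v₁ (W ∪ B)
  have hQ : ∀ s ∈ Q, s = v₁ ∨ s ∈ W ∨ s ∈ B := by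
    intro s hs; simpa [Q] using hs
  have hqinj : Set.InjOn q Q := by
    intro a ha b hb hab
    rcases hQ a ha with ha' | ha' | ha' <;> rcases hQ b hb with hb' | hb' | hb'
    · rw [ha', hb']
    · have h1 := hqWN b hb'
      rw [← hab, ha', hqv] at h1
      exact absurd h1 (H.irrefl)
    · exact absurd (hab ▸ hqA a (Or.inl ha')) (hqBA b hb')
    · have h1 := hqWN a ha'
      rw [hab, hb', hqv] at h1
      exact absurd h1 (H.irrefl)
    · rw [hqW a ha', hqW b hb'] at hab
      exact hp.injOn ha' hb' hab
    · exact absurd (hab ▸ hqA a (Or.inr ha')) (hqBA b hb')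
    · exact absurd (hab ▸ hqA b (Or.inl hb')) (hqBA a ha')
    · exact absurd (hab ▸ hqA b (Or.inr hb')) (hqBA a ha')
    · rw [hqB a ha', hqB b hb'] at hab
      exact hginj ha' hb' hab
  have hqconf : ∀ a ∈ Q, ∀ b ∈ Q, H.Adj (q a) (q b) → ¬ F.Adj a b := by
    intro a ha b hb hH hFab
    rcases hQ a ha with ha' | ha' | ha' <;> rcases hQ b hb with hb' | hb' | hb'
    · rw [ha', hb'] at hFab; exact F.irrefl hFab
    · rw [ha'] at hFab; exact (hWdeg b hb').1 hFab
    · exact hqBadj b hb' _ (hqA a (Or.inl ha')) hH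
    · rw [hb'] at hFab; exact (hWdeg a ha').1 hFab.symm
    · exact hWind a ha' b hb' hFab
    · exact hqBadj b hb' _ (hqA a (Or.inr ha')) hH
    · exact hqBadj a ha' _ (hqA b (Or.inl hb')) hH.symm
    · exact hqBadj a ha' _ (hqA b (Or.inr hb')) hH.symm
    · rw [hqB a ha', hqB b hb'] at hH
      exact hgadj a ha' b hb' hH
  obtain ⟨e', he'⟩ := Finset.exists_equiv_extend_of_card_eq (t := (univ : Finset V))
    (card_univ.symm) (s := Q) (f := q) (subset_univ _) hqinj
  let e : Equiv.Perm V := e'.trans (Equiv.subtypeUnivEquiv mem_univ)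
  have he : ∀ s ∈ Q, e.symm (q s) = s := by
    intro s hs
    rw [Equiv.symm_apply_eq, ← he' s hs]
    rfl
  have hQcard : #Q ≤ 1 + D + 40 * D := by
    have h1 := card_insert_le v₁ (W ∪ B)
    have h2 := card_union_le W B
    have h3 := hD h₁
    have h4 : #Q ≤ #(W ∪ B) + 1 := h1
    omega
  refine exists_packing_of_partial H F e.symm (Q.image q) D t hD ?_ ?_ ?_
  · intro u hu
    by_contra! hlt
    have h1 : e.symm u ∈ Q := by
      by_cases h : e.symm u = v₁
      · rw [h]; exact mem_insert_self _ _
      · exact mem_insert_of_mem (mem_union_right _ (mem_filter.2 ⟨mem_univ _, h, hlt⟩))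
    refine hu (mem_image.2 ⟨e.symm u, h1, ?_⟩)
    have h2 := he _ h1
    exact e.symm.injective h2
  · intro a ha b hb
    obtain ⟨s, hs, rfl⟩ := mem_image.1 ha
    obtain ⟨s', hs', rfl⟩ := mem_image.1 hb
    rw [he s hs, he s' hs']
    exact hqconf s hs s' hs'
  · intro u hu
    have hAu : ¬ H.Adj u h₁ := by
      intro hadj
      obtain ⟨s, hs, hsu⟩ := hp.surjOn (show u ∈ (H.neighborFinset h₁ : Set V) by
        simpa using hadj.symm)
      refine hu (mem_image.2 ⟨s, mem_insert_of_mem (mem_union_left _ hs), ?_⟩)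
      rw [hqW s hs, hsu]
    have hload : ∑ a ∈ H.neighborFinset u with a ∈ Q.image q, F.degree (e.symm a) ≤
        D + ∑ s ∈ B with H.Adj u (g s), F.degree s := by
      have h1 : (H.neighborFinset u).filter (· ∈ Q.image q) =
          (Q.filter fun s => H.Adj u (q s)).image q := by
        ext a
        simp only [mem_filter, mem_image, SimpleGraph.mem_neighborFinset]
        constructor
        · rintro ⟨h1, s, hs, rfl⟩; exact ⟨s, ⟨hs, h1⟩, rfl⟩
        · rintro ⟨s, ⟨hs, h1⟩, rfl⟩; exact ⟨h1, s, hs, rfl⟩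
      rw [h1, sum_image (hqinj.mono (coe_subset.2 (filter_subset _ _)))]
      calc ∑ s ∈ Q with H.Adj u (q s), F.degree (e.symm (q s))
          = ∑ s ∈ Q with H.Adj u (q s), F.degree s :=
            sum_congr rfl fun s hs => by rw [he s (mem_filter.1 hs).1]
        _ ≤ ∑ s ∈ W ∪ B.filter (fun s => H.Adj u (g s)), F.degree s := by
            refine sum_le_sum_of_subset fun s hs => ?_
            rw [mem_filter] at hs
            rcases hQ s hs.1 with hs' | hs' | hs'
            · rw [hs', hqv] at hs; exact absurd hs.2 hAu
            · exact mem_union_left _ hs'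
            · refine mem_union_right _ (mem_filter.2 ⟨hs', ?_⟩)
              rw [← hqB s hs']; exact hs.2
        _ ≤ ∑ s ∈ W, F.degree s + ∑ s ∈ B with H.Adj u (g s), F.degree s := by
            rw [← sum_union_inter]; exact Nat.le_add_right _ _
        _ ≤ _ := by
            refine add_le_add ((sum_le_card_nsmul _ _ 1 fun s hs => (hWdeg s hs).2).trans ?_) le_rfl
            simpa [hWcard] using hD h₁
    have h2 := hgload u
    have h3 : #(Q.image q) ≤ #Q := card_image_le
    have h4 : 20 * D * t ≤ n := Nat.mul_div_le n (20 * D)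
    have h5 : 40000 * D ≤ n := by nlinarith
    rw [mul_assoc] at h4
    set E := D * t
    set S := ∑ s ∈ B with H.Adj u (g s), F.degree s
    omega

theorem ncard_edgeSet_add_compl {n : ℕ} (G : SimpleGraph (Fin n)) :
    G.edgeSet.ncard + Gᶜ.edgeSet.ncard = n.choose 2 := by
  classical
  rw [← Set.ncard_union_eq (SimpleGraph.disjoint_edgeSet.2 disjoint_compl_right),
    ← SimpleGraph.edgeSet_sup, sup_compl_eq_top, ← SimpleGraph.coe_edgeFinset,
    Set.ncard_coe_finset, SimpleGraph.card_edgeFinset_top_eq_card_choose_two, Fintype.card_fin]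

theorem choose_two_eq {n : ℕ} (hn : 0 < n) : n.choose 2 = (n - 1).choose 2 + (n - 1) := by
  obtain ⟨m, rfl⟩ := Nat.exists_eq_succ_of_ne_zero hn.ne'
  rw [Nat.succ_eq_add_one, Nat.choose_succ_succ' m 1, Nat.choose_one_right,
    Nat.add_sub_cancel, add_comm]

/-- A clique on `n - 1` vertices with a further vertex of degree `δ(H) - 1` contains no copy of `H`. -/
theorem exists_not_containsCopy {n : ℕ} (hn : 0 < n) (H : SimpleGraph (Fin n))
    [DecidableRel H.Adj] (hpos : 0 < H.minDegree) :
    ∃ G : SimpleGraph (Fin n), ¬ ContainsCopy G H ∧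
      (n - 1).choose 2 + H.minDegree - 1 = G.edgeSet.ncard := by
  classical
  let v : Fin n := ⟨0, hn⟩
  have hδ : H.minDegree < n := by
    have h1 := H.minDegree_le_degree v
    have h2 := H.degree_lt_card_verts v
    rw [Fintype.card_fin] at h2
    omega
  obtain ⟨A, hA, hAcard⟩ := exists_subset_card_eq (s := univ.erase v) (n := n - H.minDegree)
    (by simp; omega)
  have hvA : v ∉ A := fun h => by simpa using hA h
  let F : SimpleGraph (Fin n) := SimpleGraph.fromEdgeSet (A.image fun a => s(v, a))
  have hFadj : ∀ a, F.Adj v a ↔ a ∈ A := by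
    intro a
    simp only [F, SimpleGraph.fromEdgeSet_adj, coe_image, Set.mem_image, mem_coe]
    constructor
    · rintro ⟨⟨b, hb, hab⟩, hne⟩
      rw [Sym2.congr_right] at hab
      exact hab ▸ hb
    · intro ha
      exact ⟨⟨a, ha, rfl⟩, by rintro rfl; exact hvA ha⟩
  have hFcard : F.edgeSet.ncard = n - H.minDegree := by
    have h1 : F.edgeSet = (A.image fun a => s(v, a) : Finset (Sym2 (Fin n))) := by
      rw [SimpleGraph.edgeSet_fromEdgeSet, sdiff_eq_left, Set.disjoint_left]
      intro e he
      simp only [coe_image, Set.mem_image, mem_coe] at he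
      obtain ⟨a, ha, rfl⟩ := he
      simp only [Sym2.mem_diagSet, Sym2.mk_isDiag_iff]
      rintro rfl; exact hvA ha
    rw [h1, Set.ncard_coe_finset, card_image_of_injective _ fun a b h => Sym2.congr_right.1 h,
      hAcard]
  refine ⟨Fᶜ, ?_, ?_⟩
  · rintro ⟨f, hf, hcopy⟩
    obtain ⟨u, hu⟩ := (Finite.injective_iff_surjective.1 hf) v
    have h1 : (H.neighborFinset u).image f ⊆ (insert v A)ᶜ := by
      intro x hx
      obtain ⟨y, hy, rfl⟩ := mem_image.1 hx
      have h2 := hcopy u y (by simpa using hy)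
      rw [hu, SimpleGraph.compl_adj, hFadj] at h2
      simp only [mem_compl, mem_insert, not_or]
      exact ⟨h2.1.symm, h2.2⟩
    have h2 := card_le_card h1
    rw [card_image_of_injective _ hf, SimpleGraph.card_neighborFinset_eq_degree, card_compl,
      card_insert_of_notMem hvA, Fintype.card_fin, hAcard] at h2
    have h3 := H.minDegree_le_degree u
    omega
  · have h1 := ncard_edgeSet_add_compl F
    rw [hFcard, choose_two_eq hn] at h1
    omega

theorem turan_number_sparse_spanning :
    ∃ n₀ : ℕ, ∀ n : ℕ, n₀ ≤ n →
      ∀ (H : SimpleGraph (Fin n)) [DecidableRel H.Adj],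
        (∀ v : Fin n, 0 < H.degree v) →
        (H.maxDegree : ℝ) ≤ Real.sqrt n / 200 →
        exNum n H = (n - 1).choose 2 + H.minDegree - 1 := by
  classical
  refine ⟨1, fun n hn H _ hpos hΔ => ?_⟩
  have : Nonempty (Fin n) := ⟨⟨0, hn⟩⟩
  obtain ⟨h₁, hh₁⟩ := H.exists_minimal_degree_vertex
  have hδ : 0 < H.minDegree := hh₁ ▸ hpos h₁
  have hmax : 0 < H.maxDegree := (hpos h₁).trans_le (H.degree_le_maxDegree h₁)
  have hsq : 40000 * H.maxDegree ^ 2 ≤ n := by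
    have h1 : (200 * H.maxDegree : ℝ) ≤ Real.sqrt n := by linarith
    have h2 : (200 * H.maxDegree : ℝ) ^ 2 ≤ n := by
      calc (200 * H.maxDegree : ℝ) ^ 2 ≤ Real.sqrt n ^ 2 := by gcongr
        _ = (n : ℝ) := Real.sq_sqrt (Nat.cast_nonneg n)
    have h3 : (200 * H.maxDegree) ^ 2 ≤ n := by exact_mod_cast h2
    linarith
  refine IsGreatest.csSup_eq ⟨exists_not_containsCopy hn H hδ, ?_⟩
  rintro m ⟨G, hG, rfl⟩
  by_contra! hlt
  refine hG ?_
  have h1 := ncard_edgeSet_add_compl G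
  rw [choose_two_eq hn, ← SimpleGraph.coe_edgeFinset Gᶜ, Set.ncard_coe_finset] at h1
  obtain ⟨f, hf⟩ := exists_packing H Gᶜ H.maxDegree hmax H.degree_le_maxDegree
    (by simpa using hsq) h₁ (by rw [← hh₁, Fintype.card_fin]; omega)
  refine ⟨f, f.injective, fun u v huv => ?_⟩
  have h2 := hf u v huv
  rw [SimpleGraph.compl_adj, not_and, not_not] at h2
  exact h2 (f.injective.ne huv.ne)
end

section
/- There exists n₀ such that for every n ≥ n₀ the following holds: if H is a simple graph on n vertices with no isolated vertices and maximum degree Δ(H) ≤ √n/200, and G is a simple graph on n vertices with at most n − δ(H) − 1 edges, then G and H pack. -/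
open Finset

section Packing

variable {V : Type*} [Fintype V]

/-- The preimage of a neighborhood under a permutation has the size of the degree. -/
lemma card_filter_adj_equiv (H : SimpleGraph V) [DecidableRel H.Adj] (σ : V ≃ V) (x : V) :
    #{c | H.Adj x (σ c)} = H.degree x := by
  rw [← H.card_neighborFinset_eq_degree, ← Finset.card_map σ.toEmbedding]
  congr 1
  ext y
  simp only [mem_map_equiv, mem_filter_univ, Equiv.apply_symm_apply,
    SimpleGraph.mem_neighborFinset]

/-- A graph with few edges has few vertices of degree greater than `|V| / (100 Δ)`. -/
lemma card_filter_lt_degree_le (G : SimpleGraph V) [DecidableRel G.Adj] (Δ : ℕ) (hpos : 0 < Δ)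
    (hG : #G.edgeFinset < Fintype.card V) :
    #{v | Fintype.card V / (100 * Δ) < G.degree v} ≤ 200 * Δ := by
  set B : Finset V := {v | Fintype.card V / (100 * Δ) < G.degree v}
  have h₁ : #B * Fintype.card V ≤ ∑ v ∈ B, 100 * Δ * G.degree v := by
    rw [← smul_eq_mul]
    refine card_nsmul_le_sum _ _ _ fun v hv => ?_
    rw [mem_filter_univ, Nat.div_lt_iff_lt_mul (by omega)] at hv
    linarith
  have h₂ : ∑ v ∈ B, G.degree v ≤ 2 * #G.edgeFinset := by
    rw [← G.sum_degrees_eq_twice_card_edges]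
    exact sum_le_sum_of_subset (subset_univ _)
  rw [← mul_sum] at h₁
  refine le_of_mul_le_mul_right (h₁.trans ?_) (show 0 < Fintype.card V by omega)
  nlinarith

variable [DecidableEq V]

/-- An injection on a finset extends to a permutation. -/
lemma exists_equiv_eqOn_of_injOn (φ : V → V) (P : Finset V) (hφ : Set.InjOn φ P) :
    ∃ σ : V ≃ V, ∀ a ∈ P, σ a = φ a := by
  obtain ⟨e, he⟩ := Finset.exists_equiv_extend_of_card_eq (t := univ) card_univ.symm
    (subset_univ (P.image φ)) hφ
  exact ⟨e.trans (Equiv.subtypeUnivEquiv mem_univ), he⟩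

/-- An injection of `P` without conflicts can be extended, and repaired by switching pairs of
vertices outside `P`, to a packing, if the vertices outside `P` have small degree in `G` and see,
through `H`, only few edges of `G`. -/
lemma exists_packing_of_partial_packing (G H : SimpleGraph V) [DecidableRel G.Adj]
    [DecidableRel H.Adj] (φ : V → V) (P : Finset V) (t M Δ : ℕ)
    (hφ : Set.InjOn φ P) (hΔ : ∀ v, H.degree v ≤ Δ)
    (ht : ∀ a ∉ P, G.degree a ≤ t)
    (hP : ∀ a ∈ P, ∀ b ∈ P, G.Adj a b → ¬ H.Adj (φ a) (φ b))
    (hM : ∀ σ : V ≃ V, (∀ a ∈ P, σ a = φ a) →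
      ∀ a ∉ P, ∑ b with H.Adj (σ a) (σ b), G.degree b ≤ M)
    (hlt : #P + (Δ + 1) + M + t * Δ < Fintype.card V) :
    ∃ σ : V ≃ V, ∀ a b, G.Adj a b → ¬ H.Adj (σ a) (σ b) := by
  obtain ⟨σ₀, hσ₀⟩ := exists_equiv_eqOn_of_injOn φ P hφ
  let conflicts (σ : V ≃ V) : Finset (V × V) := {p | G.Adj p.1 p.2 ∧ H.Adj (σ p.1) (σ p.2)}
  obtain ⟨σ, hσ, hmin⟩ := Finset.exists_min_image
    ({σ | ∀ a ∈ P, σ a = φ a} : Finset (V ≃ V)) (fun σ => #(conflicts σ)) ⟨σ₀, by simpa using hσ₀⟩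
  simp only [mem_filter_univ] at hσ hmin
  refine ⟨σ, ?_⟩
  by_contra! hcon
  obtain ⟨a, b, hab, hab', haP⟩ : ∃ a b, G.Adj a b ∧ H.Adj (σ a) (σ b) ∧ a ∉ P := by
    obtain ⟨a, b, hab, hab'⟩ := hcon
    by_cases ha : a ∈ P
    · refine ⟨b, a, hab.symm, hab'.symm, fun hb => hP a ha b hb hab ?_⟩
      rwa [← hσ a ha, ← hσ b hb]
    · exact ⟨a, b, hab, hab', ha⟩
  let bad : Finset V := P ∪ (insert a ({c | H.Adj (σ a) (σ c)} : Finset V)) ∪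
    ({b | H.Adj (σ a) (σ b)} : Finset V).biUnion (fun b => G.neighborFinset b) ∪
    (G.neighborFinset a).biUnion (fun b => ({c | H.Adj (σ b) (σ c)} : Finset V))
  have hbad : #bad < #(univ : Finset V) := by
    have h₁ : #(insert a ({c | H.Adj (σ a) (σ c)} : Finset V)) ≤ Δ + 1 :=
      (card_insert_le _ _).trans (by rw [card_filter_adj_equiv]; grind)
    have h₂ : #(({b | H.Adj (σ a) (σ b)} : Finset V).biUnion (fun b => G.neighborFinset b)) ≤ M :=
      card_biUnion_le.trans (by simpa using hM σ hσ a haP)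
    have h₃ : #((G.neighborFinset a).biUnion (fun b => ({c | H.Adj (σ b) (σ c)} : Finset V))) ≤
        t * Δ := by
      refine (card_biUnion_le_card_mul _ _ Δ fun b _ => ?_).trans
        (Nat.mul_le_mul_right _ (by simpa using ht a haP))
      rw [card_filter_adj_equiv]
      exact hΔ _
    have h₄ := card_union_le P (insert a ({c | H.Adj (σ a) (σ c)} : Finset V))
    refine lt_of_le_of_lt ((card_union_le _ _).trans
      (add_le_add ((card_union_le _ _).trans (add_le_add h₄ h₂)) h₃)) ?_
    rw [card_univ]
    omega
  obtain ⟨c, -, hc⟩ := exists_mem_notMem_of_card_lt_card hbad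
  simp only [bad, mem_union, mem_insert, mem_filter_univ, mem_biUnion,
    SimpleGraph.mem_neighborFinset, not_or, not_exists, not_and] at hc
  obtain ⟨⟨⟨hcP, hca, hcn⟩, hcG⟩, hcH⟩ := hc
  let τ : V ≃ V := (Equiv.swap a c).trans σ
  have hτa : τ a = σ c := by simp [τ]
  have hτc : τ c = σ a := by simp [τ]
  have hτ : ∀ x, x ≠ a → x ≠ c → τ x = σ x := fun x h₁ h₂ => by
    simp [τ, Equiv.swap_apply_of_ne_of_ne h₁ h₂]
  have hτP : ∀ x ∈ P, τ x = φ x := fun x hx => by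
    rw [hτ x (by grind) (by grind), hσ x hx]
  have hτa_free : ∀ x, G.Adj a x → ¬ H.Adj (τ a) (τ x) := fun x hx hx' => by
    rw [hτa] at hx'
    by_cases hxc : x = c
    · subst hxc
      rw [hτc] at hx'
      exact hcn hx'.symm
    · rw [hτ x hx.ne' hxc] at hx'
      exact hcH x hx hx'.symm
  have hτc_free : ∀ x, G.Adj c x → ¬ H.Adj (τ c) (τ x) := fun x hx hx' => by
    by_cases hxa : x = a
    · subst hxa
      exact hτa_free c hx.symm hx'.symm
    · rw [hτc, hτ x hxa hx.ne'] at hx'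
      exact hcG x hx' hx.symm
  refine absurd (hmin τ hτP) (not_le.2 (card_lt_card ?_))
  rw [ssubset_iff_of_subset]
  · refine ⟨(a, b), by simp [conflicts, hab, hab'], ?_⟩
    simp only [conflicts, mem_filter_univ, not_and]
    exact hτa_free b
  · rintro ⟨p, q⟩ hpq
    simp only [conflicts, mem_filter_univ] at hpq ⊢
    obtain ⟨h₁, h₂⟩ := hpq
    have hpa : p ≠ a := fun h => hτa_free q (h ▸ h₁) (h ▸ h₂)
    have hpc : p ≠ c := fun h => hτc_free q (h ▸ h₁) (h ▸ h₂)
    have hqa : q ≠ a := fun h => hτa_free p (h ▸ h₁.symm) (h ▸ h₂.symm)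
    have hqc : q ≠ c := fun h => hτc_free p (h ▸ h₁.symm) (h ▸ h₂.symm)
    rw [hτ p hpa hpc, hτ q hqa hqc] at h₂
    exact ⟨h₁, h₂⟩

/-- Greedy choice of an independent set of representatives `g b`, `b ∈ B`, away from `A`, such
that no vertex sees representatives of large total weight. -/
lemma exists_independent_representatives (H : SimpleGraph V) [DecidableRel H.Adj] (A : Finset V)
    (d : V → ℕ) (L D m k Δ W : ℕ) (hΔ : ∀ v, H.degree v ≤ Δ) (hW : Δ * W < L * m)
    (hn : (#A + k) * (Δ + 1) + m * Δ ≤ Fintype.card V) (B : Finset V) (hk : #B ≤ k)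
    (hd : ∀ b ∈ B, d b ≤ D) (hsum : ∑ b ∈ B, d b ≤ W) :
    ∃ g : V → V, Set.InjOn g B ∧ (∀ b ∈ B, g b ∉ A ∧ ∀ x ∈ A, ¬ H.Adj x (g b)) ∧
      (∀ b ∈ B, ∀ c ∈ B, ¬ H.Adj (g b) (g c)) ∧
      ∀ u, ∑ b ∈ B with H.Adj u (g b), d b ≤ L + D := by
  induction B using Finset.induction_on with
  | empty => exact ⟨id, by simp⟩
  | insert b B hb ih =>
    rw [card_insert_of_notMem hb] at hk
    rw [sum_insert hb] at hsum
    obtain ⟨g, hinj, hA, hind, hload⟩ := ih (by omega) (fun c hc => hd c (mem_insert_of_mem hc))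
      (by omega)
    let heavy : Finset V := {u | L ≤ ∑ c ∈ B with H.Adj u (g c), d c}
    have hheavy : #heavy < m := by
      have h₁ : L * #heavy ≤ Δ * W := calc
        L * #heavy ≤ ∑ u ∈ heavy, ∑ c ∈ B with H.Adj u (g c), d c := by
          rw [mul_comm, ← smul_eq_mul]
          exact card_nsmul_le_sum _ _ _ fun u hu => by simpa [heavy] using hu
        _ ≤ ∑ u, ∑ c ∈ B with H.Adj u (g c), d c := sum_le_sum_of_subset (subset_univ _)
        _ = ∑ c ∈ B, H.degree (g c) * d c := by
          simp_rw [sum_filter]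
          rw [sum_comm]
          refine sum_congr rfl fun c _ => ?_
          rw [← sum_filter, sum_const, smul_eq_mul, ← H.card_neighborFinset_eq_degree]
          congr 2
          ext y
          simp [H.adj_comm]
        _ ≤ ∑ c ∈ B, Δ * d c := sum_le_sum fun c _ => Nat.mul_le_mul_right _ (hΔ _)
        _ ≤ Δ * W := by
          rw [← mul_sum]
          exact Nat.mul_le_mul_left _ (by omega)
      exact lt_of_mul_lt_mul_left (h₁.trans_lt hW) (Nat.zero_le L)
    let bad : Finset V := (A ∪ B.image g).biUnion (fun x => insert x (H.neighborFinset x)) ∪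
      heavy.biUnion (fun u => H.neighborFinset u)
    have hbad : #bad < #(univ : Finset V) := by
      have h₁ : #((A ∪ B.image g).biUnion (fun x => insert x (H.neighborFinset x))) ≤
          (#A + #B) * (Δ + 1) :=
        (card_biUnion_le_card_mul _ _ (Δ + 1) fun x _ => (card_insert_le _ _).trans
          (by simpa using hΔ x)).trans (Nat.mul_le_mul_right _
          ((card_union_le _ _).trans (Nat.add_le_add_left card_image_le _)))
      have h₂ : #(heavy.biUnion (fun u => H.neighborFinset u)) ≤ m * Δ :=
        (card_biUnion_le_card_mul _ _ Δ fun x _ => by simpa using hΔ x).trans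
          (Nat.mul_le_mul_right _ hheavy.le)
      have h₃ : (#A + #B) * (Δ + 1) < (#A + k) * (Δ + 1) :=
        Nat.mul_lt_mul_of_pos_right (by omega) (by omega)
      have h₄ : #bad ≤ _ := card_union_le
        ((A ∪ B.image g).biUnion (fun x => insert x (H.neighborFinset x)))
        (heavy.biUnion (fun u => H.neighborFinset u))
      rw [card_univ]
      omega
    obtain ⟨c, -, hc⟩ := exists_mem_notMem_of_card_lt_card hbad
    have hcA : c ∉ A ∧ ∀ x ∈ A, ¬ H.Adj x c := by
      simp only [bad, mem_union, mem_biUnion, mem_insert, SimpleGraph.mem_neighborFinset] at hc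
      grind
    have hcB : ∀ x ∈ B, g x ≠ c ∧ ¬ H.Adj (g x) c := by
      simp only [bad, mem_union, mem_biUnion, mem_insert, mem_image,
        SimpleGraph.mem_neighborFinset] at hc
      grind
    have hcheavy : ∀ u, H.Adj u c → ∑ x ∈ B with H.Adj u (g x), d x < L := fun u hu => by
      by_contra! h
      exact hc (mem_union_right _ (mem_biUnion.2 ⟨u, by simpa [heavy] using h, by simpa using hu⟩))
    have hgb : ∀ x ∈ B, Function.update g b c x = g x := fun x hx =>
      Function.update_of_ne (by grind) _ _
    refine ⟨Function.update g b c, ?_, ?_, ?_, fun u => ?_⟩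
    · rw [coe_insert, Set.injOn_insert (by simpa using hb)]
      refine ⟨hinj.congr fun x hx => (hgb x hx).symm, ?_⟩
      rintro ⟨x, hx, hxc⟩
      rw [hgb x hx, Function.update_self] at hxc
      exact (hcB x hx).1 hxc
    · simp only [mem_insert, forall_eq_or_imp, Function.update_self]
      exact ⟨hcA, fun x hx => by rw [hgb x hx]; exact hA x hx⟩
    · intro x hx y hy
      rcases mem_insert.1 hx with rfl | hx' <;> rcases mem_insert.1 hy with rfl | hy'
      · exact H.irrefl
      · rw [Function.update_self, hgb y hy', H.adj_comm]
        exact (hcB y hy').2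
      · rw [Function.update_self, hgb x hx']
        exact (hcB x hx').2
      · rw [hgb x hx', hgb y hy']
        exact hind x hx' y hy'
    · have hB : ∑ x ∈ B with H.Adj u (Function.update g b c x), d x =
          ∑ x ∈ B with H.Adj u (g x), d x := by
        congr 1
        exact filter_congr fun x hx => by rw [hgb x hx]
      rw [filter_insert, Function.update_self]
      split_ifs with hu
      · rw [sum_insert (by simp [hb]), hB, add_comm]
        exact add_le_add (hcheavy u hu).le (hd b (mem_insert_self _ _))
      · rw [hB]
        exact hload u

/-- Deleting one endpoint of each edge inside `W` leaves an independent set. -/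
lemma exists_independent_subset (G : SimpleGraph V) [DecidableRel G.Adj] (W : Finset V) :
    ∃ S ⊆ W, #W ≤ #S + #{e ∈ G.edgeFinset | ∀ v ∈ e, v ∈ W} ∧
      ∀ a ∈ S, ∀ b ∈ S, ¬ G.Adj a b := by
  let X : Finset V :=
    ({e ∈ G.edgeFinset | ∀ v ∈ e, v ∈ W} : Finset (Sym2 V)).image (fun e => (Quot.out e).1)
  refine ⟨W \ X, sdiff_subset, ?_, fun a ha b hb hab => ?_⟩
  · have h₁ := le_card_sdiff X W
    have h₂ : #X ≤ #{e ∈ G.edgeFinset | ∀ v ∈ e, v ∈ W} := card_image_le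
    omega
  · rw [mem_sdiff] at ha hb
    have hX : (Quot.out s(a, b)).1 ∈ X := mem_image_of_mem _ (by simp [hab, ha.1, hb.1])
    rcases Sym2.mem_iff.1 (Sym2.out_fst_mem s(a, b)) with h | h
    · exact ha.2 (h ▸ hX)
    · exact hb.2 (h ▸ hX)

/-- Vertices other than `v` have small total degree if `v` meets most edges. -/
lemma sum_degree_add_two_mul_degree_le (G : SimpleGraph V) [DecidableRel G.Adj] (v : V)
    (T : Finset V) (hv : v ∉ T) :
    ∑ a ∈ T, G.degree a + 2 * G.degree v ≤ #T + 2 * #G.edgeFinset := by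
  have h₁ : ∑ a ∈ T, G.degree a ≤ ∑ a ∈ T, 1 + ∑ a ∈ T, #(G.neighborFinset a \ {v}) := by
    rw [← sum_add_distrib]
    refine sum_le_sum fun a _ => ?_
    have := le_card_sdiff {v} (G.neighborFinset a)
    simp only [card_singleton, SimpleGraph.card_neighborFinset_eq_degree] at this
    omega
  have h₂ : ∑ a ∈ T, #(G.neighborFinset a \ {v}) ≤
      ∑ a ∈ univ.erase v, #(G.neighborFinset a \ {v}) :=
    sum_le_sum_of_subset fun a ha => by grind
  have h₃ : ∑ a ∈ univ.erase v, #(G.neighborFinset a \ {v}) + G.degree v =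
      ∑ a ∈ univ.erase v, G.degree a := by
    have h : G.degree v = ∑ a ∈ univ.erase v, if G.Adj a v then 1 else 0 := by
      rw [← card_filter, ← G.card_neighborFinset_eq_degree]
      congr 1
      ext a
      simpa [G.adj_comm] using fun h : G.Adj v a => h.ne'
    rw [h, ← sum_add_distrib]
    refine sum_congr rfl fun a _ => ?_
    split_ifs with hav
    · rw [sdiff_singleton_eq_erase, card_erase_add_one (by simpa using hav),
        G.card_neighborFinset_eq_degree]
    · rw [sdiff_singleton_eq_erase, erase_eq_of_notMem (by simpa using hav),
        G.card_neighborFinset_eq_degree, add_zero]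
  have h₄ : G.degree v + ∑ a ∈ univ.erase v, G.degree a = 2 * #G.edgeFinset := by
    rw [← G.sum_degrees_eq_twice_card_edges]
    exact add_sum_erase _ (fun a => G.degree a) (mem_univ v)
  rw [sum_const, smul_eq_mul, mul_one] at h₁
  omega

/-- Packing when no vertex of `G` is adjacent to almost all others. -/
lemma exists_packing_of_degree_le (G H : SimpleGraph V) [DecidableRel G.Adj]
    [DecidableRel H.Adj] (Δ : ℕ) (hpos : 0 < Δ) (hΔ : ∀ v, H.degree v ≤ Δ)
    (hn : 40000 * Δ ^ 2 ≤ Fintype.card V) (hG : #G.edgeFinset < Fintype.card V)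
    (hmax : ∀ v, 5 * G.degree v ≤ 4 * Fintype.card V) :
    ∃ σ : V ≃ V, ∀ a b, G.Adj a b → ¬ H.Adj (σ a) (σ b) := by
  have hB := card_filter_lt_degree_le G Δ hpos hG
  set n := Fintype.card V
  set t := n / (100 * Δ) with ht
  set B : Finset V := {v | t < G.degree v} with hB_def
  have htn : t * Δ * 100 ≤ n := by
    have := Nat.div_mul_le_self n (100 * Δ)
    rw [← ht] at this
    linarith
  have hΔΔ : Δ ≤ Δ ^ 2 := Nat.le_self_pow two_ne_zero Δ
  obtain ⟨g, hinj, -, hind, hload⟩ := exists_independent_representatives H ∅ (fun a => G.degree a)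
    (n / 10) (4 * n / 5) (21 * Δ) (200 * Δ) Δ (2 * n) hΔ
    (by
      have : 2 * n < n / 10 * 21 := by omega
      nlinarith)
    (by rw [card_empty]; nlinarith) B hB (fun b _ => by have := hmax b; omega)
    (by
      refine (sum_le_sum_of_subset (subset_univ B)).trans ?_
      rw [G.sum_degrees_eq_twice_card_edges]
      omega)
  refine exists_packing_of_partial_packing G H g B t (n / 10 + 4 * n / 5 + Δ * t) Δ hinj hΔ
    (fun a ha => by simpa [hB_def] using ha) (fun a ha b hb _ => hind a ha b hb)
    (fun σ hσ a ha => ?_) (by nlinarith [Nat.div_mul_le_self n 10, Nat.div_mul_le_self (4 * n) 5])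
  rw [← sum_filter_add_sum_filter_not _ (· ∈ B)]
  refine add_le_add (le_trans (le_of_eq ?_) (hload (σ a))) ?_
  · refine sum_congr ?_ fun _ _ => rfl
    ext b
    simp only [mem_filter, mem_univ, true_and]
    rw [and_comm]
    exact and_congr_right fun hb => by rw [hσ b hb]
  · refine (sum_le_card_nsmul _ _ t fun b hb => ?_).trans (Nat.mul_le_mul_right _ ?_)
    · simpa [hB_def] using (mem_filter.1 hb).2
    · refine (card_le_card (filter_subset _ _)).trans ?_
      rw [card_filter_adj_equiv]
      exact hΔ _

/-- Packing when some vertex of `G` is adjacent to almost all others. -/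
lemma exists_packing_of_lt_degree (G H : SimpleGraph V) [DecidableRel G.Adj]
    [DecidableRel H.Adj] (Δ : ℕ) (hpos : 0 < Δ) (hΔ : ∀ v, H.degree v ≤ Δ)
    (hn : 40000 * Δ ^ 2 ≤ Fintype.card V) (x : V)
    (hG : #G.edgeFinset + H.degree x + 1 ≤ Fintype.card V)
    (v : V) (hv : 4 * Fintype.card V < 5 * G.degree v) :
    ∃ σ : V ≃ V, ∀ a b, G.Adj a b → ¬ H.Adj (σ a) (σ b) := by
  have hB := card_filter_lt_degree_le G Δ hpos (by omega)
  set n := Fintype.card V with hn_def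
  set t := n / (100 * Δ) with ht
  set B : Finset V := {v | t < G.degree v} with hB_def
  have htn : t * Δ * 100 ≤ n := by
    have := Nat.div_mul_le_self n (100 * Δ)
    rw [← ht] at this
    linarith
  have hΔΔ : Δ ≤ Δ ^ 2 := Nat.le_self_pow two_ne_zero Δ
  have hx := hΔ x
  obtain ⟨S, hSv, hvS, hScard, hSind⟩ : ∃ S : Finset V, (∀ a ∈ S, ¬ G.Adj v a) ∧ v ∉ S ∧
      #S = H.degree x ∧ ∀ a ∈ S, ∀ b ∈ S, ¬ G.Adj a b := by
    obtain ⟨S, hSW, hcard, hS⟩ :=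
      exists_independent_subset G (univ \ insert v (G.neighborFinset v))
    have h₁ : #(univ \ insert v (G.neighborFinset v)) + (G.degree v + 1) = n := by
      rw [← G.card_neighborFinset_eq_degree v,
        ← card_insert_of_notMem (G.notMem_neighborFinset_self v),
        card_sdiff_add_card_eq_card (subset_univ _), card_univ]
    have h₂ : #{e ∈ G.edgeFinset | ∀ a ∈ e, a ∈ univ \ insert v (G.neighborFinset v)} +
        G.degree v ≤ #G.edgeFinset := by
      rw [← G.card_incidenceFinset_eq_degree, ← card_union_of_disjoint]
      · exact card_le_card (union_subset (filter_subset _ _) (G.incidenceFinset_subset v))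
      · rw [disjoint_left]
        intro e he he'
        have hve : v ∈ e := ((G.mem_incidenceFinset v e).1 he').2
        simpa using (mem_filter.1 he).2 v hve
    obtain ⟨S', hS', hcard'⟩ := exists_subset_card_eq (show H.degree x ≤ #S by omega)
    refine ⟨S', fun a ha => ?_, fun ha => ?_, hcard', fun a ha b hb => hS a (hS' ha) b (hS' hb)⟩
    · have := hSW (hS' ha)
      simp_all
    · have := hSW (hS' ha)
      simp_all
  obtain ⟨e, heinj, heS⟩ : ∃ e : V → V, Set.InjOn e S ∧ ∀ a ∈ S, H.Adj x (e a) := by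
    let ε := Finset.equivOfCardEq (hScard.trans (H.card_neighborFinset_eq_degree x).symm)
    refine ⟨fun a => if h : a ∈ S then (ε ⟨a, h⟩ : V) else a, fun a ha b hb hab => ?_,
      fun a ha => ?_⟩
    · rw [mem_coe] at ha hb
      simpa [ha, hb, Subtype.ext_iff] using hab
    · simpa only [ha, dite_true] using (H.mem_neighborFinset x _).1 (ε ⟨a, ha⟩).2
  set A := insert x (H.neighborFinset x) with hA_def
  have hAcard : #A ≤ Δ + 1 := (card_insert_le _ _).trans (by simpa using hx)
  obtain ⟨g, hginj, hgA, hgind, -⟩ := exists_independent_representatives H A 0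
    1 0 1 (200 * Δ) Δ 0 hΔ (by simp) (by nlinarith) (B \ insert v S)
    ((card_le_card sdiff_subset).trans hB) (by simp) (by simp)
  have hgx : ∀ b ∈ B \ insert v S, g b ≠ x ∧ ¬ H.Adj x (g b) := fun b hb => by
    have := (hgA b hb).1
    simpa [hA_def] using this
  have hgN : ∀ b ∈ B \ insert v S, ∀ y, H.Adj x y → ¬ H.Adj y (g b) := fun b hb y hy =>
    (hgA b hb).2 y (by simp [hA_def, hy])
  let φ : V → V := fun a => if a = v then x else if a ∈ S then e a else g a
  let P : Finset V := insert v S ∪ B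
  have hφv : φ v = x := by simp [φ]
  have hφS : ∀ a ∈ S, φ a = e a := fun a ha => by
    have : a ≠ v := by grind
    simp [φ, ha, this]
  have hφB : ∀ a ∈ B \ insert v S, φ a = g a := fun a ha => by
    simp only [mem_sdiff, mem_insert, not_or] at ha
    simp [φ, ha]
  have hPcases : ∀ a ∈ P, a = v ∨ a ∈ S ∨ a ∈ B \ insert v S := by
    intro a ha
    simp only [P, mem_union, mem_insert, mem_sdiff] at ha ⊢
    tauto
  have hPcard : #P ≤ Δ + 1 + 200 * Δ :=
    (card_union_le _ _).trans (add_le_add ((card_insert_le _ _).trans (by omega)) hB)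
  have hφP : Set.InjOn φ P := by
    intro a ha b hb hab
    rcases hPcases a ha with rfl | ha' | ha' <;> rcases hPcases b hb with rfl | hb' | hb'
    · rfl
    · rw [hφv, hφS b hb'] at hab
      exact absurd (hab ▸ heS b hb') H.irrefl
    · rw [hφv, hφB b hb'] at hab
      exact absurd hab.symm (hgx b hb').1
    · rw [hφv, hφS a ha'] at hab
      exact absurd (hab ▸ heS a ha') H.irrefl
    · rw [hφS a ha', hφS b hb'] at hab
      exact heinj ha' hb' hab
    · rw [hφS a ha', hφB b hb'] at hab
      exact absurd (hab ▸ heS a ha') (hgx b hb').2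
    · rw [hφv, hφB a ha'] at hab
      exact absurd hab (hgx a ha').1
    · rw [hφB a ha', hφS b hb'] at hab
      exact absurd (hab ▸ heS b hb') (hgx a ha').2
    · rw [hφB a ha', hφB b hb'] at hab
      exact hginj ha' hb' hab
  refine exists_packing_of_partial_packing G H φ P t (Δ + 2 * (#G.edgeFinset - G.degree v)) Δ
    hφP hΔ (fun a ha => ?_) (fun a ha b hb hab => ?_) (fun σ hσ a ha => ?_) ?_
  · have : a ∉ B := fun h => ha (mem_union_right _ h)
    simpa [hB_def] using this
  · rcases hPcases a ha with rfl | ha' | ha' <;> rcases hPcases b hb with rfl | hb' | hb'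
    · exact absurd hab G.irrefl
    · exact absurd hab (hSv b hb')
    · rw [hφv, hφB b hb']
      exact (hgx b hb').2
    · exact absurd hab.symm (hSv a ha')
    · exact absurd hab (hSind a ha' b hb')
    · rw [hφS a ha', hφB b hb']
      exact hgN b hb' _ (heS a ha')
    · rw [hφv, hφB a ha', H.adj_comm]
      exact (hgx a ha').2
    · rw [hφB a ha', hφS b hb', H.adj_comm]
      exact hgN a ha' _ (heS b hb')
    · rw [hφB a ha', hφB b hb']
      exact hgind a ha' b hb'
  · have hSN : S.image e = H.neighborFinset x := by
      refine eq_of_subset_of_card_le (image_subset_iff.2 fun s hs => by simpa using heS s hs) ?_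
      rw [card_image_of_injOn heinj, hScard, H.card_neighborFinset_eq_degree]
    have hvT : v ∉ ({b | H.Adj (σ a) (σ b)} : Finset V) := by
      rw [mem_filter_univ, hσ v (by simp [P]), hφv, H.adj_comm, ← H.mem_neighborFinset, ← hSN,
        mem_image]
      rintro ⟨s, hs, hsa⟩
      have hsP : s ∈ P := by simp [P, hs]
      rw [← hφS s hs, ← hσ s hsP] at hsa
      exact ha (σ.injective hsa ▸ hsP)
    have h₁ := sum_degree_add_two_mul_degree_le G v _ hvT
    rw [card_filter_adj_equiv] at h₁
    have h₂ := hΔ (σ a)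
    omega
  · have h₁ : 5 * (#G.edgeFinset - G.degree v) ≤ n := by omega
    nlinarith

end Packing

theorem sparse_graph_packs_with_few_edges :
    ∃ n₀ : ℕ, ∀ n : ℕ, n₀ ≤ n →
      ∀ (H : SimpleGraph (Fin n)) [DecidableRel H.Adj] (G : SimpleGraph (Fin n)),
        (∀ v : Fin n, 0 < H.degree v) →
        (H.maxDegree : ℝ) ≤ Real.sqrt n / 200 →
        G.edgeSet.ncard ≤ n - H.minDegree - 1 →
        ∃ f : Fin n → Fin n, Function.Bijective f ∧
          ∀ u v : Fin n, H.Adj u v → ¬ G.Adj (f u) (f v) := by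
  refine ⟨1, fun n hn H _ G hdeg hmax hG => ?_⟩
  classical
  have : Nonempty (Fin n) := ⟨⟨0, hn⟩⟩
  obtain ⟨x, hx⟩ := H.exists_minimal_degree_vertex
  have hΔ : ∀ v, H.degree v ≤ H.maxDegree := H.degree_le_maxDegree
  have hpos : 0 < H.maxDegree := (hdeg x).trans_le (hΔ x)
  have hsq : 40000 * H.maxDegree ^ 2 ≤ Fintype.card (Fin n) := by
    rw [Fintype.card_fin]
    have h₁ : (200 * (H.maxDegree : ℝ)) ^ 2 ≤ n := by
      rw [← Real.sq_sqrt (Nat.cast_nonneg n)]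
      gcongr
      linarith
    have h₂ : ((40000 * H.maxDegree ^ 2 : ℕ) : ℝ) ≤ (n : ℝ) := by
      push_cast
      linarith
    exact_mod_cast h₂
  have hedges : #G.edgeFinset + H.degree x + 1 ≤ Fintype.card (Fin n) := by
    rw [Set.ncard_eq_toFinset_card', ← SimpleGraph.edgeFinset, hx] at hG
    have := H.degree_lt_card_verts x
    rw [Fintype.card_fin] at this ⊢
    omega
  obtain ⟨σ, hσ⟩ : ∃ σ : Fin n ≃ Fin n, ∀ a b, G.Adj a b → ¬ H.Adj (σ a) (σ b) := by
    by_cases hmaxG : ∀ v, 5 * G.degree v ≤ 4 * Fintype.card (Fin n)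
    · exact exists_packing_of_degree_le G H _ hpos hΔ hsq (by omega) hmaxG
    · push Not at hmaxG
      obtain ⟨v, hv⟩ := hmaxG
      exact exists_packing_of_lt_degree G H _ hpos hΔ hsq x hedges v hv
  exact ⟨σ.symm, σ.symm.bijective, fun u w huw hG' => hσ _ _ hG' (by simpa using huw)⟩
end

section
/- There exists n₀ such that for every n ≥ n₀ the following holds: let 1 ≤ δ ≤ √n/200, let G be a simple graph on n vertices with exactly n − δ − 1 edges, let v_1, …, v_n be an ordering of its vertices with d(v_1) ≥ d(v_2) ≥ … ≥ d(v_n), and suppose that for each i with 2 ≤ i ≤ n we are given an independent set S_i of G, disjoint from N[v_i], with |S_i| ≥ n/18 and with every vertex of S_i of degree at most 10 in G. Then there exist sets B_i ⊆ S_i for 2 ≤ i ≤ n such that: (1) for every i with 2 ≤ i ≤ n, |N(v_i) ∩ (B_2 ∪ … ∪ B_{i−1})| ≤ 4√n; and (2) for every i with 2 ≤ i ≤ ⌈√n/10⌉, |B_i \ (N[B_2] ∪ … ∪ N[B_{i−1}])| ≥ √n/50. -/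
/-- The closed neighborhood `N[A]` of a finite set `A` of vertices. -/
def closedNbhd {n : ℕ} (G : SimpleGraph (Fin n)) [DecidableRel G.Adj]
    (A : Finset (Fin n)) : Finset (Fin n) :=
  A ∪ A.biUnion (fun a => G.neighborFinset a)

open Finset

/-- Derandomized sequential selection: if a uniformly random admissible choice at each step does
not increase the expected weight of any `i`, then some sequence of choices keeps the total weight
at most its initial value. -/
theorem exists_seq_sum_prod_le_card {α ι : Type*} [DecidableEq α] [Nonempty α] [Fintype ι]
    (F : ℕ → Finset α) (bad : α → Finset α) (f : ℕ → ι → α → ℝ) (c T : ℕ)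
    (hf : ∀ t i y, 0 ≤ f t i y)
    (hbad : ∀ t < T, ∀ y ∈ F t, (bad y).card ≤ c)
    (hF : ∀ t < T, ∀ A ⊆ F t, (F t).card ≤ A.card + c * t →
      A.Nonempty ∧ ∀ i, ∑ y ∈ A, f t i y ≤ A.card) :
    ∃ x : ℕ → α, (∀ t < T, x t ∈ F t ∧ ∀ r < t, x t ∉ bad (x r)) ∧
      ∑ i, ∏ s ∈ range T, f s i (x s) ≤ Fintype.card ι := by
  induction T with
  | zero => exact ⟨fun _ => Classical.arbitrary α, by simp⟩
  | succ T ih =>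
    obtain ⟨x, hx, hsum⟩ := ih (fun t ht => hbad t (by omega)) (fun t ht => hF t (by omega))
    set A := F T \ (range T).biUnion (fun r => bad (x r)) with hA
    have hcard : (F T).card ≤ A.card + c * T := by
      have h1 : ((range T).biUnion (fun r => bad (x r))).card ≤ (range T).card * c :=
        card_biUnion_le_card_mul _ _ _ fun r hr =>
          hbad r (by have := mem_range.1 hr; omega) _ (hx r (mem_range.1 hr)).1
      have h2 := card_le_card_sdiff_add_card (s := F T)
        (t := (range T).biUnion (fun r => bad (x r)))
      rw [card_range, mul_comm] at h1
      rw [← hA] at h2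
      omega
    obtain ⟨hne, hle⟩ := hF T (by omega) A sdiff_subset hcard
    obtain ⟨y, hyA, hy⟩ : ∃ y ∈ A,
        ∑ i, (∏ s ∈ range T, f s i (x s)) * f T i y ≤ Fintype.card ι := by
      apply exists_le_of_sum_le hne
      rw [sum_comm]
      calc ∑ i, ∑ y ∈ A, (∏ s ∈ range T, f s i (x s)) * f T i y
          ≤ ∑ i, (∏ s ∈ range T, f s i (x s)) * A.card := by
            refine sum_le_sum fun i _ => ?_
            rw [← mul_sum]
            exact mul_le_mul_of_nonneg_left (hle i) (prod_nonneg fun _ _ => hf _ _ _)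
        _ = (∑ i, ∏ s ∈ range T, f s i (x s)) * A.card := by rw [sum_mul]
        _ ≤ Fintype.card ι * A.card := by gcongr
        _ = ∑ _y ∈ A, (Fintype.card ι : ℝ) := by simp [mul_comm]
    have hlt : ∀ s < T, Function.update x T y s = x s := fun s hs =>
      Function.update_of_ne (by omega) _ _
    refine ⟨Function.update x T y, fun t ht => ?_, ?_⟩
    · rcases Nat.lt_succ_iff_lt_or_eq.1 ht with h | rfl
      · rw [hlt t h]
        refine ⟨(hx t h).1, fun r hr => ?_⟩
        rw [hlt r (by omega)]
        exact (hx t h).2 r hr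
      · rw [Function.update_self]
        rw [hA, mem_sdiff] at hyA
        refine ⟨hyA.1, fun r hr hb => hyA.2 ?_⟩
        rw [hlt r hr] at hb
        exact mem_biUnion.2 ⟨r, mem_range.2 hr, hb⟩
    · refine le_of_eq_of_le (sum_congr rfl fun i _ => ?_) hy
      rw [prod_range_succ, Function.update_self]
      congr 1
      exact prod_congr rfl fun s hs => by rw [hlt s (mem_range.1 hs)]

/-- In a graph whose vertices are listed by decreasing degree, the vertex at position `i`
(counted from `0`) has degree at most `2 |E| / (i + 1)`. -/
theorem succ_mul_degree_le_two_mul_card_edgeFinset {n : ℕ} (G : SimpleGraph (Fin n))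
    [DecidableRel G.Adj] (v : Fin n → Fin n) (hv : Function.Bijective v)
    (hd : ∀ i j : Fin n, i ≤ j → G.degree (v j) ≤ G.degree (v i)) (i : Fin n) :
    ((i : ℕ) + 1) * G.degree (v i) ≤ 2 * G.edgeFinset.card := by
  rw [← G.sum_degrees_eq_twice_card_edges, ← hv.sum_comp (fun u => G.degree u)]
  calc ((i : ℕ) + 1) * G.degree (v i) = ∑ _j ∈ Iic i, G.degree (v i) := by simp
    _ ≤ ∑ j ∈ Iic i, G.degree (v j) := sum_le_sum fun j hj => hd j i (mem_Iic.1 hj)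
    _ ≤ ∑ j, G.degree (v j) := sum_le_sum_of_subset (subset_univ _)

/-- A quantity whose power of two is at most `n * exp (80 m)`, where `m ≤ √n / 50 + 1`, is at
most `4 √n` once `n` is large. -/
theorem le_four_mul_sqrt_of_two_pow_le {n m X : ℕ} (hn : 1000000 ≤ n)
    (hm : (m : ℝ) ≤ √n / 50 + 1) (hX : (2 : ℝ) ^ X ≤ n * Real.exp (80 * m)) :
    (X : ℝ) ≤ 4 * √n := by
  have hn' : (1000000 : ℝ) ≤ n := by exact_mod_cast hn
  have hr : (1000 : ℝ) ≤ √n := Real.le_sqrt_of_sq_le (by linarith)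
  have hlog : Real.log n ≤ √n / 5 + 18 := by
    have h1 : Real.log n = 2 * Real.log √n := by
      rw [Real.log_sqrt (by positivity)]; ring
    have h2 := Real.log_le_sub_one_of_pos (x := √n / 10) (by positivity)
    have h3 := Real.log_le_sub_one_of_pos (x := 10) (by norm_num)
    rw [Real.log_div (by positivity) (by norm_num)] at h2
    linarith
  have h := Real.log_le_log (by positivity) hX
  rw [Real.log_pow, Real.log_mul (by positivity) (Real.exp_pos _).ne', Real.log_exp] at h
  have h2 := Real.log_two_gt_d9
  by_contra! hc
  nlinarith

/-- A step of the selection: a random element of a set of at least `n / 40` elements multiplies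
the expected weight attached to a neighborhood of size at most `2 n / k` by at most
`1 + 80 / k`. -/
theorem sum_ite_two_div_le_card {α : Type*} [DecidableEq α] (A N : Finset α) (n k : ℕ)
    (hk : 0 < k) (hA : (n : ℝ) / 40 ≤ A.card) (hN : k * N.card ≤ 2 * n) :
    ∑ y ∈ A, (if y ∈ N then (2 : ℝ) else 1) / (1 + 80 / k) ≤ A.card := by
  have hk' : (0 : ℝ) < k := by exact_mod_cast hk
  have hN' : (k : ℝ) * N.card ≤ 2 * n := by exact_mod_cast hN
  rw [← sum_div, div_le_iff₀ (by positivity)]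
  have h1 : ∑ y ∈ A, (if y ∈ N then (2 : ℝ) else 1) = A.card + (A ∩ N).card := by
    calc ∑ y ∈ A, (if y ∈ N then (2 : ℝ) else 1)
        = ∑ y ∈ A, (1 + if y ∈ N then (1 : ℝ) else 0) :=
          sum_congr rfl fun y _ => by split_ifs <;> norm_num
      _ = _ := by
          rw [sum_add_distrib, ← sum_filter, filter_mem_eq_inter]
          simp
  have h2 : ((A ∩ N).card : ℝ) ≤ N.card := by exact_mod_cast card_le_card inter_subset_right
  have h3 : (N.card : ℝ) ≤ A.card * (80 / k) := by
    rw [← mul_div_assoc, le_div_iff₀ hk']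
    nlinarith
  rw [h1]
  linarith

/-- Elementary size bounds for a selection of `⌈√n / 50⌉` vertices in each of fewer than
`⌈√n / 10⌉` rounds. -/
theorem selection_size_bounds {n m k : ℕ} (hn : 1000000 ≤ n) (hm : m = ⌈√(n : ℝ) / 50⌉₊)
    (hk : k + 1 = ⌈√(n : ℝ) / 10⌉₊) :
    0 < m ∧ (m : ℝ) ≤ √n / 50 + 1 ∧ k < n ∧ 11 * ((k * m : ℕ) : ℝ) + n / 40 ≤ n / 18 := by
  have hn' : (1000000 : ℝ) ≤ n := by exact_mod_cast hn
  have hr : (1000 : ℝ) ≤ √n := Real.le_sqrt_of_sq_le (by linarith)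
  have hsq : √(n : ℝ) * √n = n := Real.mul_self_sqrt (by positivity)
  have hm1 : (m : ℝ) ≤ √n / 50 + 1 := hm ▸ (Nat.ceil_lt_add_one (by positivity)).le
  have hk1 : (k : ℝ) ≤ √n / 10 := by
    have := Nat.ceil_lt_add_one (a := √(n : ℝ) / 10) (by positivity)
    rw [← hk] at this
    push_cast at this
    linarith
  refine ⟨hm ▸ Nat.ceil_pos.2 (by positivity), hm1, ?_, ?_⟩
  · have : (k : ℝ) < n := by nlinarith
    exact_mod_cast this
  · have : (k : ℝ) * m ≤ √n / 10 * (√n / 50 + 1) := by gcongr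
    push_cast
    nlinarith

/-- A product of factors `(2 or 1) / w`, taken over those `s < T` that satisfy `p`, is at least
`2 ^ X / exp (80 m)`, where `X` counts the factors `2`, there are at most `k m` factors and
`w = 1 + 80 / k`. -/
theorem two_pow_le_prod_mul_exp (p q : ℕ → Prop) [DecidablePred p] [DecidablePred q]
    (T k m : ℕ) (hk : 0 < k) (hT : ((range T).filter p).card ≤ k * m) :
    (2 : ℝ) ^ ((range T).filter (fun s => p s ∧ q s)).card ≤
      (∏ s ∈ range T, if p s then (if q s then (2 : ℝ) else 1) / (1 + 80 / k) else 1) *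
        Real.exp (80 * m) := by
  have hk' : (0 : ℝ) < k := by exact_mod_cast hk
  have hw : (1 : ℝ) ≤ 1 + 80 / k := by
    have : (0 : ℝ) ≤ 80 / k := by positivity
    linarith
  have h1 : (∏ s ∈ range T, if p s then (if q s then (2 : ℝ) else 1) / (1 + 80 / k) else 1) =
      2 ^ ((range T).filter (fun s => p s ∧ q s)).card /
        (1 + 80 / k) ^ ((range T).filter p).card := by
    rw [← prod_filter, prod_div_distrib, prod_const, ← prod_filter, filter_filter, prod_const]
  have h2 : (1 + 80 / (k : ℝ)) ^ ((range T).filter p).card ≤ Real.exp (80 * m) := by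
    calc (1 + 80 / (k : ℝ)) ^ ((range T).filter p).card ≤ (1 + 80 / (k : ℝ)) ^ (k * m) :=
          pow_le_pow_right₀ hw hT
      _ ≤ Real.exp (80 / k) ^ (k * m) := by
          gcongr
          rw [add_comm]
          exact Real.add_one_le_exp _
      _ = Real.exp (80 * m) := by
          rw [← Real.exp_nat_mul]
          congr 1
          push_cast
          field_simp
  rw [h1, div_mul_eq_mul_div, le_div_iff₀ (by positivity)]
  gcongr

theorem card_filter_div_succ_lt_le (T m i : ℕ) (hm : 0 < m) :
    ((range T).filter (fun s => s / m + 1 < i)).card ≤ (i + 1) * m := by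
  calc ((range T).filter (fun s => s / m + 1 < i)).card ≤ (range ((i + 1) * m)).card := by
        refine card_le_card fun s hs => ?_
        rw [mem_filter] at hs
        rw [mem_range, ← Nat.div_lt_iff_lt_mul hm]
        omega
    _ = (i + 1) * m := card_range _

theorem card_filter_div_succ_eq (k m i : ℕ) (hi : 1 ≤ i) (hik : i ≤ k) (hm : 0 < m) :
    ((range (k * m)).filter (fun s => s / m + 1 = i)).card = m := by
  obtain ⟨j, rfl⟩ := Nat.exists_eq_add_of_le' hi
  have : (range (k * m)).filter (fun s => s / m + 1 = j + 1) = Ico (j * m) ((j + 1) * m) := by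
    ext s
    have hle : (j + 1) * m ≤ k * m := Nat.mul_le_mul_right m hik
    have h1 := Nat.le_div_iff_mul_le (x := j) (y := s) hm
    have h2 := Nat.div_lt_iff_lt_mul (x := s) (y := j + 1) hm
    rw [mem_filter, mem_range, mem_Ico, ← h1, ← h2]
    constructor
    · rintro ⟨-, h⟩
      omega
    · rintro ⟨h3, h4⟩
      have := h2.1 h4
      exact ⟨by omega, by omega⟩
  rw [this, Nat.card_Ico, Nat.succ_mul]
  omega

theorem random_subsets_lemma :
    ∃ n₀ : ℕ, ∀ n : ℕ, n₀ ≤ n → ∀ δ : ℕ, 1 ≤ δ → (δ : ℝ) ≤ Real.sqrt n / 200 →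
      ∀ (G : SimpleGraph (Fin n)) [DecidableRel G.Adj],
        G.edgeFinset.card = n - δ - 1 →
        ∀ v : Fin n → Fin n, Function.Bijective v →
          (∀ i j : Fin n, i ≤ j → G.degree (v j) ≤ G.degree (v i)) →
          ∀ S : Fin n → Finset (Fin n),
            -- for every `i` with (1-indexed) `2 ≤ i ≤ n`, i.e. 0-indexed `1 ≤ i`,
            -- `S i` is independent, disjoint from `N[v i]`, of size `≥ n/18`, with all
            -- degrees at most 10:
            (∀ i : Fin n, 1 ≤ (i : ℕ) →
              (∀ u ∈ S i, ∀ w ∈ S i, u ≠ w → ¬ G.Adj u w) ∧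
              (∀ u ∈ S i, u ≠ v i ∧ ¬ G.Adj (v i) u) ∧
              (n : ℝ) / 18 ≤ (S i).card ∧
              (∀ u ∈ S i, G.degree u ≤ 10)) →
            ∃ B : Fin n → Finset (Fin n),
              (∀ i : Fin n, B i ⊆ S i) ∧
              -- (1) `|C i| = |N(v i) ∩ (B_2 ∪ ⋯ ∪ B_{i-1})| ≤ 4√n`:
              (∀ i : Fin n, 1 ≤ (i : ℕ) →
                ((G.neighborFinset (v i) ∩
                  (Finset.univ.filter (fun j : Fin n => 1 ≤ (j : ℕ) ∧ j < i)).biUnion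
                    B).card : ℝ) ≤ 4 * Real.sqrt n) ∧
              -- (2) `|D i| = |B i \ (N[B_2] ∪ ⋯ ∪ N[B_{i-1}])| ≥ √n / 50`
              -- for `2 ≤ i ≤ ⌈√n / 10⌉` (1-indexed):
              (∀ i : Fin n, 1 ≤ (i : ℕ) → (i : ℕ) + 1 ≤ ⌈Real.sqrt n / 10⌉₊ →
                Real.sqrt n / 50 ≤
                  ((B i \ (Finset.univ.filter (fun j : Fin n => 1 ≤ (j : ℕ) ∧ j < i)).biUnion
                    (fun j => closedNbhd G (B j))).card : ℝ)) := by
  refine ⟨1000000, fun n hn δ _ _ G _ hE v hv hd S hS => ?_⟩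
  obtain ⟨k, hk⟩ : ∃ k, k + 1 = ⌈√(n : ℝ) / 10⌉₊ := by
    have hn0 : (0 : ℝ) < n := by exact_mod_cast (by omega : 0 < n)
    exact ⟨_, Nat.succ_pred_eq_of_pos (Nat.ceil_pos.2 (by positivity))⟩
  obtain ⟨m, hm⟩ : ∃ m, m = ⌈√(n : ℝ) / 50⌉₊ := ⟨_, rfl⟩
  obtain ⟨hm0, hm1, hkn, hsize⟩ := selection_size_bounds hn hm hk
  have : NeZero n := ⟨by omega⟩
  let J : ℕ → Fin n := fun s => Fin.ofNat n (s / m + 1)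
  have hJ : ∀ s < k * m, (J s : ℕ) = s / m + 1 := fun s hs => by
    have := (Nat.div_lt_iff_lt_mul hm0).2 hs
    exact Nat.mod_eq_of_lt (by omega)
  have hdeg : ∀ i : Fin n, ((i : ℕ) + 1) * (G.neighborFinset (v i)).card ≤ 2 * n := fun i => by
    have := succ_mul_degree_le_two_mul_card_edgeFinset G v hv hd i
    rw [G.card_neighborFinset_eq_degree]
    omega
  have hSJ : ∀ s < k * m, _ := fun s hs => hS (J s) (by rw [hJ s hs]; exact Nat.le_add_left 1 _)
  obtain ⟨x, hx, hsum⟩ := exists_seq_sum_prod_le_card (ι := Fin n) (fun s => S (J s))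
    (fun y => insert y (G.neighborFinset y))
    (fun s i y => if s / m + 1 < (i : ℕ) then
      (if y ∈ G.neighborFinset (v i) then (2 : ℝ) else 1) / (1 + 80 / ((i + 1 : ℕ) : ℝ)) else 1)
    11 (k * m) (fun t i y => by split_ifs <;> positivity)
    (fun t ht y hy => (card_insert_le _ _).trans
      (Nat.succ_le_succ ((G.card_neighborFinset_eq_degree y).trans_le
        ((hSJ t ht).2.2.2 y hy))))
    (fun t ht A _ hA => by
      have hA' : (n : ℝ) / 40 ≤ A.card := by
        have h1 : ((S (J t)).card : ℝ) ≤ A.card + 11 * t := by exact_mod_cast hA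
        have h2 : (t : ℝ) ≤ (k * m : ℕ) := by exact_mod_cast ht.le
        linarith [(hSJ t ht).2.2.1]
      refine ⟨card_pos.1 ?_, fun i => ?_⟩
      · have hn0 : (0 : ℝ) < n := by exact_mod_cast (by omega : 0 < n)
        have : (0 : ℝ) < A.card := by linarith
        exact_mod_cast this
      · by_cases h : t / m + 1 < (i : ℕ)
        · simpa only [h, if_true] using
            sum_ite_two_div_le_card A _ n ((i : ℕ) + 1) (by omega) hA' (hdeg i)
        · simp [h])
  have hinj : ∀ r < k * m, ∀ s < k * m, x r = x s → r = s := by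
    intro r hr s hs h
    rcases lt_trichotomy r s with h' | h' | h'
    · exact absurd (h ▸ mem_insert_self _ _) ((hx s hs).2 r h')
    · exact h'
    · exact absurd (h ▸ mem_insert_self _ _) ((hx r hr).2 s h')
  let B : Fin n → Finset (Fin n) := fun i =>
    ((range (k * m)).filter (fun s => s / m + 1 = (i : ℕ))).image x
  have hB : ∀ i y, y ∈ B i ↔ ∃ s, (s < k * m ∧ s / m + 1 = (i : ℕ)) ∧ x s = y := fun i y => by
    simp only [B, mem_image, mem_filter, mem_range]
  refine ⟨B, fun i y hy => ?_, fun i _ => ?_, fun i hi hik => ?_⟩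
  · obtain ⟨s, ⟨hs, hsi⟩, rfl⟩ := (hB i y).1 hy
    have : J s = i := Fin.ext ((hJ s hs).trans hsi)
    exact this ▸ (hx s hs).1
  · refine le_trans ?_ (le_four_mul_sqrt_of_two_pow_le (X := ((range (k * m)).filter
      (fun s => s / m + 1 < (i : ℕ) ∧ x s ∈ G.neighborFinset (v i))).card) hn hm1 ?_)
    · refine Nat.cast_le.2 (le_trans (card_le_card fun y hy => ?_) (card_image_le (f := x)))
      obtain ⟨hyN, hyB⟩ := mem_inter.1 hy
      obtain ⟨j, hj, hyj⟩ := mem_biUnion.1 hyB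
      obtain ⟨s, ⟨hs, hsj⟩, rfl⟩ := (hB j y).1 hyj
      have hji : (j : ℕ) < i := (mem_filter.1 hj).2.2
      exact mem_image.2 ⟨s, mem_filter.2 ⟨mem_range.2 hs, by omega, hyN⟩, rfl⟩
    · refine (two_pow_le_prod_mul_exp _ _ (k * m) ((i : ℕ) + 1) m (by omega)
        (card_filter_div_succ_lt_le _ _ _ hm0)).trans ?_
      gcongr
      rw [Fintype.card_fin] at hsum
      exact (single_le_sum (f := fun i : Fin n => ∏ s ∈ range (k * m),
        if s / m + 1 < (i : ℕ) then (if x s ∈ G.neighborFinset (v i) then (2 : ℝ) else 1) /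
          (1 + 80 / ((i + 1 : ℕ) : ℝ)) else 1)
        (fun i _ => prod_nonneg fun s _ => by split_ifs <;> positivity) (mem_univ i)).trans hsum
  · rw [← hk] at hik
    have hcard : (B i).card = m := by
      rw [card_image_of_injOn, card_filter_div_succ_eq k m i hi (by omega) hm0]
      intro r hr s hs h
      exact hinj r (mem_range.1 (mem_filter.1 hr).1) s (mem_range.1 (mem_filter.1 hs).1) h
    rw [sdiff_eq_self_of_disjoint, hcard, hm]
    · exact Nat.le_ceil _
    · rw [disjoint_left]
      intro y hy hyU
      obtain ⟨j, hj, hyj⟩ := mem_biUnion.1 hyU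
      have hji : (j : ℕ) < i := (mem_filter.1 hj).2.2
      obtain ⟨s, ⟨hs, hsi⟩, rfl⟩ := (hB i y).1 hy
      obtain ⟨b, hb, hyb⟩ : ∃ b ∈ B j, x s ∈ insert b (G.neighborFinset b) := by
        rcases mem_union.1 hyj with h | h
        · exact ⟨_, h, mem_insert_self _ _⟩
        · obtain ⟨b, hb, h⟩ := mem_biUnion.1 h
          exact ⟨b, hb, mem_insert_of_mem h⟩
      obtain ⟨r, ⟨hr, hrj⟩, rfl⟩ := (hB j b).1 hb
      refine (hx s hs).2 r ?_ hyb
      by_contra! h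
      have := Nat.div_le_div_right (c := m) h
      omega
end

section
/- There exists n₀ such that for every n ≥ n₀ the following holds: if H is a simple graph on n vertices with no isolated vertices and maximum degree Δ(H) ≤ √n/200, then every simple graph G on n vertices with at least C(n−1,2) + δ(H) edges contains a subgraph isomorphic to H. -/
open Finset

set_option linter.unusedSectionVars false

namespace SparseSpanning

lemma exists_perm_agree_on {V : Type*} [DecidableEq V] (f : Equiv.Perm V) {P : Finset V} {y w : V}
    (hy : y ∉ P) (hw : f.symm w ∉ P) :
    ∃ g : Equiv.Perm V, (∀ b ∈ P, g b = f b) ∧ g y = w := by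
  refine ⟨(Equiv.swap y (f.symm w)).trans f, fun b hb => ?_, by simp⟩
  have h1 : b ≠ y := fun h => hy (h ▸ hb)
  have h2 : b ≠ f.symm w := fun h => hw (h ▸ hb)
  simp [Equiv.swap_apply_of_ne_of_ne h1 h2]

lemma symm_eq_of_agree_on {V : Type*} {f g : Equiv.Perm V} {P : Finset V}
    (hfg : ∀ b ∈ P, g b = f b) {v : V} (hv : f.symm v ∈ P) : g.symm v = f.symm v := by
  rw [Equiv.symm_apply_eq, hfg _ hv, Equiv.apply_symm_apply]

variable {V : Type*} [Fintype V] [DecidableEq V]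

lemma exists_notMem_of_card_lt {S : Finset V} (h : #S < Fintype.card V) : ∃ x, x ∉ S := by
  by_contra! hS
  have : S = univ := eq_univ_iff_forall.2 hS
  rw [this, card_univ] at h
  exact h.false

variable (D H : SimpleGraph V) [DecidableRel D.Adj] [DecidableRel H.Adj]

/-- The conflicts of a placement `f`: ordered edges of `H` mapped to edges of `D`. -/
def conflicts (f : Equiv.Perm V) : Finset (V × V) :=
  {p | H.Adj p.1 p.2 ∧ D.Adj (f p.1) (f p.2)}

variable {D H}

lemma mem_conflicts {f : Equiv.Perm V} {a b : V} :
    (a, b) ∈ conflicts D H f ↔ H.Adj a b ∧ D.Adj (f a) (f b) := by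
  simp [conflicts]

lemma card_biUnion_neighborFinset_le (S : Finset V) (g : V → V) {m k : ℕ} (hS : #S ≤ m)
    (hk : ∀ a ∈ S, D.degree (g a) ≤ k) :
    #(S.biUnion fun a => D.neighborFinset (g a)) ≤ m * k :=
  (card_biUnion_le_card_mul _ _ k fun a ha => by simpa using hk a ha).trans
    (Nat.mul_le_mul_right _ hS)

/-- One conflict outside `P` can be removed by swapping two vertices outside `P`. -/
lemma exists_swap_conflicts_card_lt {P : Finset V} {f : Equiv.Perm V} {Δ t : ℕ}
    (hΔ : ∀ x, H.degree x ≤ Δ)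
    (hout : ∀ a, a ∉ P → D.degree (f a) ≤ t)
    (hbd : ∀ a, a ∉ P → ∀ b, H.Adj a b → D.degree (f b) ≤ t)
    (hcard : #P + 2 * (Δ * t) + Δ < Fintype.card V)
    {a b : V} (ha : a ∉ P) (hab : H.Adj a b) (hDab : D.Adj (f a) (f b)) :
    ∃ c, c ∉ P ∧ #(conflicts D H ((Equiv.swap a c).trans f)) < #(conflicts D H f) := by
  let S₁ : Finset V := ((H.neighborFinset a).biUnion fun b => D.neighborFinset (f b)).image f.symm
  let S₂ : Finset V := (D.neighborFinset (f a)).biUnion fun w => H.neighborFinset (f.symm w)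
  have h1 : #S₁ ≤ Δ * t := card_image_le.trans <|
    card_biUnion_neighborFinset_le _ f (by simpa using hΔ a)
      fun b hb => hbd a ha b (by simpa using hb)
  have h2 : #S₂ ≤ Δ * t := by
    rw [mul_comm]
    exact card_biUnion_neighborFinset_le _ f.symm (by simpa using hout a ha) fun b _ => hΔ _
  have h3 : #(H.neighborFinset a) ≤ Δ := by simpa using hΔ a
  have hlt : #(P ∪ S₁ ∪ S₂ ∪ H.neighborFinset a) < Fintype.card V := by
    have := card_union_le (P ∪ S₁ ∪ S₂) (H.neighborFinset a)
    have := card_union_le (P ∪ S₁) S₂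
    have := card_union_le P S₁
    omega
  obtain ⟨c, hc⟩ := exists_notMem_of_card_lt hlt
  simp only [mem_union, not_or] at hc
  obtain ⟨⟨⟨hcP, hc1⟩, hc2⟩, hc3⟩ := hc
  have hc1' : ∀ b, H.Adj a b → ¬ D.Adj (f b) (f c) := fun b hb hD =>
    hc1 (mem_image.2 ⟨f c, mem_biUnion.2 ⟨b, by simpa using hb, by simpa using hD⟩, by simp⟩)
  have hc2' : ∀ b, H.Adj c b → ¬ D.Adj (f a) (f b) := fun b hb hD =>
    hc2 (mem_biUnion.2 ⟨f b, by simpa using hD, by simpa using hb.symm⟩)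
  have hc3' : ¬ H.Adj a c := by simpa using hc3
  refine ⟨c, hcP, card_lt_card ?_⟩
  have key : ∀ p q, H.Adj p q → D.Adj (f (Equiv.swap a c p)) (f (Equiv.swap a c q)) →
      p ≠ a ∧ p ≠ c := by
    intro p q hpq hD
    constructor
    · rintro rfl
      have hq1 : q ≠ p := hpq.ne'
      have hq2 : q ≠ c := fun h => hc3' (h ▸ hpq)
      rw [Equiv.swap_apply_left, Equiv.swap_apply_of_ne_of_ne hq1 hq2] at hD
      exact hc1' q hpq hD.symm
    · rintro rfl
      have hq1 : q ≠ p := hpq.ne'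
      have hq2 : q ≠ a := fun h => hc3' (h ▸ hpq.symm)
      rw [Equiv.swap_apply_right, Equiv.swap_apply_of_ne_of_ne hq2 hq1] at hD
      exact hc2' q hpq hD
  rw [ssubset_iff_of_subset]
  · refine ⟨(a, b), mem_conflicts.2 ⟨hab, hDab⟩, fun h => ?_⟩
    simp only [mem_conflicts, Equiv.trans_apply] at h
    exact (key a b h.1 h.2).1 rfl
  · rintro ⟨p, q⟩ h
    simp only [mem_conflicts, Equiv.trans_apply] at h ⊢
    have hp := key p q h.1 h.2
    have hq := key q p h.1.symm h.2.symm
    rw [Equiv.swap_apply_of_ne_of_ne hp.1 hp.2, Equiv.swap_apply_of_ne_of_ne hq.1 hq.2] at h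
    exact h

/-- If the conflict-free set `P` contains every vertex placed on or next to a vertex of degree more
than `t`, then the remaining conflicts can be removed by swaps. -/
lemma exists_perm_conflict_free {P : Finset V} {Δ t : ℕ}
    (hΔ : ∀ x, H.degree x ≤ Δ) (hcard : #P + 2 * (Δ * t) + Δ < Fintype.card V)
    (f : Equiv.Perm V)
    (hP : ∀ a ∈ P, ∀ b ∈ P, H.Adj a b → ¬ D.Adj (f a) (f b))
    (hout : ∀ a, a ∉ P → D.degree (f a) ≤ t)
    (hbd : ∀ a, a ∉ P → ∀ b, H.Adj a b → D.degree (f b) ≤ t) :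
    ∃ g : Equiv.Perm V, ∀ a b, H.Adj a b → ¬ D.Adj (g a) (g b) := by
  induction hm : #(conflicts D H f) using Nat.strong_induction_on generalizing f with
  | _ m ih =>
    by_cases hf : ∀ a b, H.Adj a b → ¬ D.Adj (f a) (f b)
    · exact ⟨f, hf⟩
    push Not at hf
    obtain ⟨a, b, ha, hab, hD⟩ : ∃ a b, a ∉ P ∧ H.Adj a b ∧ D.Adj (f a) (f b) := by
      obtain ⟨a, b, hab, hD⟩ := hf
      by_cases ha : a ∈ P
      · by_cases hb : b ∈ P
        · exact absurd hD (hP a ha b hb hab)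
        · exact ⟨b, a, hb, hab.symm, hD.symm⟩
      · exact ⟨a, b, ha, hab, hD⟩
    obtain ⟨c, hc, hlt⟩ := exists_swap_conflicts_card_lt hΔ hout hbd hcard ha hab hD
    have hfix : ∀ p ∈ P, Equiv.swap a c p = p := fun p hp =>
      Equiv.swap_apply_of_ne_of_ne (fun h => ha (h ▸ hp)) fun h => hc (h ▸ hp)
    have hmov : ∀ p, p ∉ P → Equiv.swap a c p ∉ P := fun p hp h => by
      have := hfix _ h
      rw [Equiv.swap_apply_self] at this
      exact hp (this ▸ h)
    refine ih _ (by rwa [hm] at hlt) ((Equiv.swap a c).trans f) (fun p hp q hq hpq => ?_)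
      (fun p hp => hout _ (hmov p hp)) (fun p hp q hpq => ?_) rfl
    · simpa [hfix p hp, hfix q hq] using hP p hp q hq hpq
    · by_cases hq : q ∈ P
      · rw [Equiv.trans_apply, hfix q hq]
        exact hbd p hp q hpq
      · exact hout _ (hmov q hq)

lemma card_mul_le_two_mul_card_edgeFinset {S : Finset V} {m : ℕ} (h : ∀ v ∈ S, m ≤ D.degree v) :
    #S * m ≤ 2 * #D.edgeFinset := by
  rw [← D.sum_degrees_eq_twice_card_edges, ← smul_eq_mul]
  exact (card_nsmul_le_sum S _ m h).trans (sum_le_univ_sum_of_nonneg fun _ => Nat.zero_le _)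

lemma degree_add_degree_le_card_edgeFinset {u v : V} (h : u ≠ v) :
    D.degree u + D.degree v ≤ #D.edgeFinset + 1 := by
  have hinter : #(D.incidenceFinset u ∩ D.incidenceFinset v) ≤ 1 := by
    rw [← card_singleton s(u, v)]
    refine card_le_card fun e he => ?_
    simp only [mem_inter, SimpleGraph.mem_incidenceFinset] at he
    simpa using D.incidenceSet_inter_incidenceSet_subset h he
  have hunion : #(D.incidenceFinset u ∪ D.incidenceFinset v) ≤ #D.edgeFinset :=
    card_le_card (union_subset (D.incidenceFinset_subset u) (D.incidenceFinset_subset v))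
  have := card_union_add_card_inter (D.incidenceFinset u) (D.incidenceFinset v)
  simp only [SimpleGraph.card_incidenceFinset_eq_degree] at this
  omega

variable (D H) in
/-- The vertices of `P` are placed by `f` without conflicts, covering all of `Q`. Vertices of `D`
outside `Q` that are used have degree at most `t`, at most `R` used vertices have degree more than
`20`, and no vertex outside `Q` has more than `t` used neighbours of degree at most `20`. -/
structure PartialPacking (t R : ℕ) (Q : Finset V) (f : Equiv.Perm V) (P : Finset V) : Prop where
  conflict_free : ∀ a ∈ P, ∀ b ∈ P, H.Adj a b → ¬ D.Adj (f a) (f b)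
  symm_mem : ∀ v ∈ Q, f.symm v ∈ P
  degree_le : ∀ a ∈ P, f a ∉ Q → D.degree (f a) ≤ t
  load_le : ∀ u, u ∉ Q → #{a ∈ P | D.Adj u (f a) ∧ D.degree (f a) ≤ 20} ≤ t
  card_large_le : #{a ∈ P | 20 < D.degree (f a)} ≤ R

/-- The neighbourhoods of vertices outside `Q` that already have `t` used neighbours of small degree
cover few vertices. -/
lemma card_saturated_neighbors_le {Δ t : ℕ} {Q P : Finset V} {f : Equiv.Perm V}
    (hE : #D.edgeFinset ≤ Fintype.card V)
    (hQ : ∀ u ∈ Q, ∀ v, v ∉ Q → D.degree v ≤ D.degree u) (hQ0 : Q.Nonempty)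
    (hP : #P ≤ #Q * (Δ + 1)) :
    #(({u | u ∉ Q ∧ t ≤ #{a ∈ P | D.Adj u (f a) ∧ D.degree (f a) ≤ 20}} : Finset V).biUnion
      fun u => D.neighborFinset u) * t ≤ 40 * (Δ + 1) * Fintype.card V := by
  set S : Finset V := {u | u ∉ Q ∧ t ≤ #{a ∈ P | D.Adj u (f a) ∧ D.degree (f a) ≤ 20}}
  set N := Fintype.card V
  have hq : 0 < #Q := hQ0.card_pos
  have hdeg : ∀ u ∈ S, D.degree u ≤ 2 * N / #Q := fun u hu => by
    rw [Nat.le_div_iff_mul_le hq, mul_comm]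
    exact (card_mul_le_two_mul_card_edgeFinset fun v hv => hQ v hv u (mem_filter.1 hu).2.1).trans
      (by omega)
  have h1 : #(S.biUnion fun u => D.neighborFinset u) ≤ #S * (2 * N / #Q) :=
    card_biUnion_neighborFinset_le S id le_rfl hdeg
  have h2 : #S * t ≤ #P * 20 := by
    refine card_mul_le_card_mul (fun u a => D.Adj u (f a) ∧ D.degree (f a) ≤ 20)
      (fun u hu => (mem_filter.1 hu).2.2) fun a _ => ?_
    by_cases ha : D.degree (f a) ≤ 20
    · refine le_trans (card_le_card fun u hu => ?_)
        ((D.card_neighborFinset_eq_degree (f a)).trans_le ha)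
      simpa using (mem_filter.1 hu).2.1.symm
    · simp [bipartiteBelow, ha]
  have h3 : 2 * N / #Q * #Q ≤ 2 * N := Nat.div_mul_le_self _ _
  refine Nat.le_of_mul_le_mul_right (c := #Q) ?_ hq
  calc _ ≤ #S * (2 * N / #Q) * t * #Q := by gcongr
    _ = #S * t * (2 * N / #Q * #Q) := by ring
    _ ≤ #P * 20 * (2 * N) := Nat.mul_le_mul h2 h3
    _ ≤ #Q * (Δ + 1) * 20 * (2 * N) := by gcongr
    _ = _ := by ring

lemma PartialPacking.insert_of_apply {t R : ℕ} {Q P : Finset V} {f g : Equiv.Perm V} {y : V}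
    (h : PartialPacking D H t R Q f P) (hy : y ∉ P) (hfg : ∀ b ∈ P, g b = f b)
    (hsmall : D.degree (g y) ≤ 20) (ht : 20 ≤ t)
    (hconf : ∀ b ∈ P, H.Adj y b → ¬ D.Adj (g y) (f b))
    (hload : ∀ u, u ∉ Q → D.Adj u (g y) →
      #{a ∈ P | D.Adj u (f a) ∧ D.degree (f a) ≤ 20} < t) :
    PartialPacking D H t R Q g (insert y P) where
  conflict_free := by
    intro a ha b hb hab
    rcases mem_insert.1 ha with rfl | ha' <;> rcases mem_insert.1 hb with rfl | hb'
    · exact (hab.ne rfl).elim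
    · rw [hfg b hb']; exact hconf b hb' hab
    · rw [hfg a ha']; exact fun hD => hconf a ha' hab.symm hD.symm
    · rw [hfg a ha', hfg b hb']; exact h.conflict_free a ha' b hb' hab
  symm_mem v hv := by
    have hv' := h.symm_mem v hv
    rw [symm_eq_of_agree_on hfg hv']
    exact mem_insert_of_mem hv'
  degree_le a ha haQ := by
    rcases mem_insert.1 ha with rfl | ha
    · omega
    · rw [hfg a ha] at haQ ⊢; exact h.degree_le a ha haQ
  load_le u hu := by
    have heq : ({a ∈ P | D.Adj u (g a) ∧ D.degree (g a) ≤ 20} : Finset V) =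
        {a ∈ P | D.Adj u (f a) ∧ D.degree (f a) ≤ 20} :=
      filter_congr fun a ha => by rw [hfg a ha]
    rw [filter_insert, heq]
    split_ifs with hc
    · exact (card_insert_le _ _).trans (hload u hu hc.1)
    · exact h.load_le u hu
  card_large_le := by
    have heq : ({a ∈ P | 20 < D.degree (g a)} : Finset V) = {a ∈ P | 20 < D.degree (f a)} :=
      filter_congr fun a ha => by rw [hfg a ha]
    rw [filter_insert, heq, if_neg (by omega)]
    exact h.card_large_le

/-- A neighbour `y` of the vertex placed on `v` can be placed. -/
lemma PartialPacking.exists_insert_neighbor {Δ t R : ℕ} {Q P : Finset V} {f : Equiv.Perm V}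
    {v y : V} (h : PartialPacking D H t R (insert v Q) f P)
    (hΔ : ∀ x, H.degree x ≤ Δ) (hΔ1 : 1 ≤ Δ) (hE : #D.edgeFinset < Fintype.card V)
    (ht1 : 10 * (Δ * t) ≤ Fintype.card V) (ht2 : 4000 * Δ ≤ t)
    (hP : #P ≤ #(insert v Q) * (Δ + 1)) (hP' : 1000 * #P ≤ Fintype.card V)
    (htop : ∀ u ∈ insert v Q, ∀ w, w ∉ insert v Q → D.degree w ≤ D.degree u)
    (hv : 2 * D.degree v ≤ Fintype.card V)
    (hclosed : ∀ u ∈ Q, ∀ b, H.Adj (f.symm u) b → b ∈ P) (hy : y ∉ P) :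
    ∃ g : Equiv.Perm V, (∀ b ∈ P, g b = f b) ∧
      PartialPacking D H t R (insert v Q) g (insert y P) := by
  set N := Fintype.card V
  let S₁ : Finset V := P.image f
  let S₂ : Finset V := {w | 20 < D.degree w}
  let S₃ : Finset V := D.neighborFinset v
  let S₄ : Finset V := ({b ∈ H.neighborFinset y | D.degree (f b) ≤ t} : Finset V).biUnion
    fun b => D.neighborFinset (f b)
  let S₅ : Finset V := ({u | u ∉ insert v Q ∧
    t ≤ #{a ∈ P | D.Adj u (f a) ∧ D.degree (f a) ≤ 20}} : Finset V).biUnion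
      fun u => D.neighborFinset u
  have h1 : #S₁ ≤ #P := card_image_le
  have h2 : #S₂ * 21 ≤ 2 * N :=
    (card_mul_le_two_mul_card_edgeFinset (D := D) fun v hv => (mem_filter.1 hv).2).trans (by omega)
  have h3 : #S₃ = D.degree v := D.card_neighborFinset_eq_degree v
  have h4 : #S₄ ≤ Δ * t := by
    refine card_biUnion_neighborFinset_le _ f ((card_filter_le _ _).trans ?_)
      fun b hb => (mem_filter.1 hb).2
    simpa using hΔ y
  have h5 : 50 * #S₅ ≤ N := by
    have := card_saturated_neighbors_le (f := f) (t := t) hE.le htop (insert_nonempty v Q) hP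
    refine Nat.le_of_mul_le_mul_right (c := 80 * Δ) ?_ (by omega)
    calc 50 * #S₅ * (80 * Δ) = #S₅ * (4000 * Δ) := by ring
      _ ≤ #S₅ * t := by gcongr
      _ ≤ 40 * (Δ + 1) * N := this
      _ ≤ 40 * (Δ + Δ) * N := by gcongr
      _ = _ := by ring
  have hlt : #(S₁ ∪ S₂ ∪ S₃ ∪ S₄ ∪ S₅) < N := by
    have := card_union_le (S₁ ∪ S₂ ∪ S₃ ∪ S₄) S₅
    have := card_union_le (S₁ ∪ S₂ ∪ S₃) S₄
    have := card_union_le (S₁ ∪ S₂) S₃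
    have := card_union_le S₁ S₂
    omega
  obtain ⟨w, hw⟩ := exists_notMem_of_card_lt hlt
  simp only [mem_union, not_or] at hw
  obtain ⟨⟨⟨⟨hw1, hw2⟩, hw3⟩, hw4⟩, hw5⟩ := hw
  have hwP : f.symm w ∉ P := fun hmem => hw1 (mem_image.2 ⟨_, hmem, by simp⟩)
  obtain ⟨g, hgf, rfl⟩ := exists_perm_agree_on f hy hwP
  refine ⟨g, hgf, h.insert_of_apply hy hgf (by simpa [S₂] using hw2) (by omega) ?_ ?_⟩
  · intro b hb hyb hD
    by_cases hbv : f b = v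
    · exact hw3 (by simpa [S₃, hbv] using hD.symm)
    · have hbQ : f b ∉ insert v Q := by
        simp only [mem_insert, hbv, false_or]
        exact fun hbQ => hy (hclosed _ hbQ y (by simpa using hyb.symm))
      exact hw4 (mem_biUnion.2 ⟨b, by simpa [hyb] using h.degree_le b hb hbQ,
        by simpa using hD.symm⟩)
  · intro u hu hD
    by_contra! hle
    exact hw5 (mem_biUnion.2 ⟨u, by simpa only [mem_filter, mem_univ, true_and] using ⟨hu, hle⟩,
      by simpa using hD⟩)

/-- A vertex `v` of large degree can be added to `Q` by placing some vertex of `H` on it. -/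
lemma PartialPacking.exists_insert_large {Δ t : ℕ} {Q P : Finset V} {f : Equiv.Perm V} {v : V}
    (h : PartialPacking D H t (#Q + Δ) Q f P) (hΔ : ∀ x, H.degree x ≤ Δ)
    (hcard : #P + (t + (#Q + Δ)) * Δ < Fintype.card V)
    (ht : 20 < t) (hvQ : v ∉ Q) (hvt : t < D.degree v) :
    ∃ (g : Equiv.Perm V) (x : V), x ∉ P ∧ g x = v ∧ (∀ b ∈ P, g b = f b) ∧
      PartialPacking D H t (#(insert v Q) + Δ) (insert v Q) g (insert x P) := by
  have hvP : f.symm v ∉ P := fun hmem => by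
    have := h.degree_le _ hmem (by simpa using hvQ)
    rw [Equiv.apply_symm_apply] at this
    omega
  let L : Finset V := {a ∈ P | D.Adj v (f a)}
  have hL : #L ≤ t + (#Q + Δ) := by
    refine le_trans (card_le_card fun a ha => ?_)
      ((card_union_le _ _).trans (add_le_add (h.load_le v hvQ) h.card_large_le))
    obtain ⟨haP, haD⟩ := mem_filter.1 ha
    by_cases hd : D.degree (f a) ≤ 20
    · exact mem_union_left _ (mem_filter.2 ⟨haP, haD, hd⟩)
    · exact mem_union_right _ (mem_filter.2 ⟨haP, not_le.1 hd⟩)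
  have hlt : #(P ∪ L.biUnion fun a => H.neighborFinset (id a)) < Fintype.card V := by
    have h1 := card_union_le P (L.biUnion fun a => H.neighborFinset (id a))
    have h2 := card_biUnion_neighborFinset_le (D := H) L id hL fun a _ => hΔ a
    omega
  obtain ⟨x, hx⟩ := exists_notMem_of_card_lt hlt
  simp only [mem_union, not_or] at hx
  obtain ⟨hxP, hxL⟩ := hx
  obtain ⟨g, hgf, hgx⟩ := exists_perm_agree_on f hxP hvP
  have hconf : ∀ b ∈ P, H.Adj x b → ¬ D.Adj v (f b) := fun b hb hxb hD =>
    hxL (mem_biUnion.2 ⟨b, mem_filter.2 ⟨hb, hD⟩, by simpa using hxb.symm⟩)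
  refine ⟨g, x, hxP, hgx, hgf, ⟨?_, ?_, ?_, ?_, ?_⟩⟩
  · intro a ha b hb hab
    rcases mem_insert.1 ha with rfl | ha' <;> rcases mem_insert.1 hb with rfl | hb'
    · exact (hab.ne rfl).elim
    · rw [hgx, hgf b hb']; exact hconf b hb' hab
    · rw [hgx, hgf a ha']; exact fun hD => hconf a ha' hab.symm hD.symm
    · rw [hgf a ha', hgf b hb']; exact h.conflict_free a ha' b hb' hab
  · intro u hu
    rcases mem_insert.1 hu with rfl | hu
    · simp [← hgx]
    · rw [symm_eq_of_agree_on hgf (h.symm_mem u hu)]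
      exact mem_insert_of_mem (h.symm_mem u hu)
  · intro a ha haQ
    rcases mem_insert.1 ha with rfl | ha
    · exact (haQ (by simp [hgx])).elim
    · rw [hgf a ha] at haQ ⊢
      exact h.degree_le a ha fun hm => haQ (mem_insert_of_mem hm)
  · intro u hu
    have heq : ({a ∈ P | D.Adj u (g a) ∧ D.degree (g a) ≤ 20} : Finset V) =
        {a ∈ P | D.Adj u (f a) ∧ D.degree (f a) ≤ 20} :=
      filter_congr fun a ha => by rw [hgf a ha]
    rw [filter_insert, heq, if_neg (by rw [hgx]; omega)]
    exact h.load_le u fun hm => hu (mem_insert_of_mem hm)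
  · have heq : ({a ∈ P | 20 < D.degree (g a)} : Finset V) = {a ∈ P | 20 < D.degree (f a)} :=
      filter_congr fun a ha => by rw [hgf a ha]
    rw [filter_insert, heq, if_pos (by rw [hgx]; omega), card_insert_of_notMem hvQ]
    have := card_insert_le x ({a ∈ P | 20 < D.degree (f a)} : Finset V)
    have := h.card_large_le
    omega

variable (D H) in
/-- A partial packing that also places all neighbours of the vertices placed on `Q`, where `Q`
consists of vertices of `D` of the largest degrees, all greater than `t`. -/
structure ClosedPacking (Δ t : ℕ) (Q : Finset V) (f : Equiv.Perm V) (P : Finset V) : Prop where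
  packing : PartialPacking D H t (#Q + Δ) Q f P
  closed : ∀ v ∈ Q, ∀ b, H.Adj (f.symm v) b → b ∈ P
  card_le : #P ≤ #Q * (Δ + 1)
  nonempty : Q.Nonempty
  lt_degree : ∀ u ∈ Q, t < D.degree u
  top : ∀ u ∈ Q, ∀ v, v ∉ Q → D.degree v ≤ D.degree u

lemma card_le_of_lt_degree {Δ t : ℕ} {Q : Finset V} (hE : #D.edgeFinset < Fintype.card V)
    (ht : Fintype.card V < 10 * Δ * (t + 1)) (hQ : ∀ u ∈ Q, t < D.degree u) : #Q ≤ 20 * Δ := by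
  have h1 : #Q * (t + 1) ≤ 2 * #D.edgeFinset := card_mul_le_two_mul_card_edgeFinset hQ
  refine Nat.le_of_mul_le_mul_right (c := t + 1) ?_ (by omega)
  calc _ ≤ 2 * #D.edgeFinset := h1
    _ ≤ 2 * (10 * Δ * (t + 1)) := by omega
    _ = _ := by ring

lemma mul_card_le_of_card_le {Δ q p N : ℕ} (hΔ1 : 1 ≤ Δ) (hN : 40000 * Δ ^ 2 ≤ N)
    (hq : q ≤ 20 * Δ) (hp : p ≤ q * (Δ + 1)) : 1000 * p ≤ N := by
  calc 1000 * p ≤ 1000 * (20 * Δ * (Δ + Δ)) := by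
        gcongr; exact hp.trans (by gcongr)
    _ = 40000 * Δ ^ 2 := by ring
    _ ≤ N := hN

lemma ClosedPacking.exists_insert {Δ t : ℕ} {Q P : Finset V} {f : Equiv.Perm V} {v : V}
    (h : ClosedPacking D H Δ t Q f P)
    (hΔ : ∀ x, H.degree x ≤ Δ) (hΔ1 : 1 ≤ Δ) (hE : #D.edgeFinset < Fintype.card V)
    (hN : 40000 * Δ ^ 2 ≤ Fintype.card V)
    (ht1 : 10 * (Δ * t) ≤ Fintype.card V) (ht2 : 4000 * Δ ≤ t)
    (ht3 : Fintype.card V < 10 * Δ * (t + 1))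
    (hvQ : v ∉ Q) (hvt : t < D.degree v) (hvmax : ∀ w, w ∉ Q → D.degree w ≤ D.degree v) :
    ∃ g P', ClosedPacking D H Δ t (insert v Q) g P' := by
  have hlt' : ∀ u ∈ insert v Q, t < D.degree u := by
    simpa [hvt] using h.lt_degree
  have htop' : ∀ u ∈ insert v Q, ∀ w, w ∉ insert v Q → D.degree w ≤ D.degree u := by
    intro u hu w hw
    have hw' : w ∉ Q := fun hm => hw (mem_insert_of_mem hm)
    rcases mem_insert.1 hu with rfl | hu
    · exact hvmax w hw'
    · exact h.top u hu w hw'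
  have hQ' : #(insert v Q) ≤ 20 * Δ := card_le_of_lt_degree hE ht3 hlt'
  have hQ : #Q + 1 ≤ 20 * Δ := by rwa [card_insert_of_notMem hvQ] at hQ'
  have hv2 : 2 * D.degree v ≤ Fintype.card V := by
    obtain ⟨u, hu⟩ := h.nonempty
    have h1 := degree_add_degree_le_card_edgeFinset (D := D) fun e : u = v => hvQ (e ▸ hu)
    have h2 := h.top u hu v hvQ
    omega
  have hP1000 := mul_card_le_of_card_le hΔ1 hN (by omega) h.card_le
  obtain ⟨f₁, x, hxP, hfx, hf₁, h₁⟩ := h.packing.exists_insert_large hΔ (by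
    have : (t + (#Q + Δ)) * Δ ≤ Δ * t + 21 * Δ ^ 2 := by
      calc _ ≤ (t + (20 * Δ + Δ)) * Δ := by gcongr; omega
        _ = _ := by ring
    omega) (by omega) hvQ hvt
  have hclosed₁ : ∀ u ∈ Q, ∀ b, H.Adj (f₁.symm u) b → b ∈ insert x P := by
    intro u hu b hb
    rw [symm_eq_of_agree_on hf₁ (h.packing.symm_mem u hu)] at hb
    exact mem_insert_of_mem (h.closed u hu b hb)
  have hfill : ∀ S : Finset V, S ⊆ H.neighborFinset x → ∃ (g : Equiv.Perm V) (P' : Finset V),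
      insert x P ⊆ P' ∧ (∀ b ∈ insert x P, g b = f₁ b) ∧ S ⊆ P' ∧ #P' ≤ #P + 1 + #S ∧
      PartialPacking D H t (#(insert v Q) + Δ) (insert v Q) g P' := by
    intro S
    induction S using Finset.induction_on with
    | empty => exact fun _ => ⟨f₁, insert x P, Subset.rfl, fun _ _ => rfl, empty_subset _,
        (card_insert_le _ _).trans (by simp), h₁⟩
    | insert y S hyS ih =>
      intro hS
      obtain ⟨g, P', hsub, hg, hSP, hcard, hpack⟩ := ih ((subset_insert _ _).trans hS)
      rw [card_insert_of_notMem hyS]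
      by_cases hy : y ∈ P'
      · exact ⟨g, P', hsub, hg, insert_subset hy hSP, by omega, hpack⟩
      have hSΔ : #S + 1 ≤ Δ := by
        rw [← card_insert_of_notMem hyS]
        exact (card_le_card hS).trans (by simpa using hΔ x)
      have hP' : #P' ≤ #(insert v Q) * (Δ + 1) := by
        rw [card_insert_of_notMem hvQ, add_mul]
        have := h.card_le
        omega
      obtain ⟨g', hg', hpack'⟩ := hpack.exists_insert_neighbor hΔ hΔ1 hE ht1 ht2 hP'
        (mul_card_le_of_card_le hΔ1 hN hQ' hP') htop' hv2 (fun u hu b hb => by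
          rw [symm_eq_of_agree_on hg (h₁.symm_mem u (mem_insert_of_mem hu))] at hb
          exact hsub (hclosed₁ u hu b hb)) hy
      refine ⟨g', insert y P', hsub.trans (subset_insert _ _),
        fun b hb => (hg' b (hsub hb)).trans (hg b hb),
        insert_subset_insert _ hSP, ?_, hpack'⟩
      have := card_insert_le y P'
      omega
  obtain ⟨g, P', hsub, hg, hSP, hcard, hpack⟩ := hfill _ Subset.rfl
  refine ⟨g, P', hpack, ?_, ?_, insert_nonempty _ _, hlt', htop'⟩
  · intro u hu b hb
    rw [symm_eq_of_agree_on hg (h₁.symm_mem u hu)] at hb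
    rcases mem_insert.1 hu with rfl | hu
    · rw [← hfx, Equiv.symm_apply_apply] at hb
      exact hSP (by simpa using hb)
    · exact hsub (hclosed₁ u hu b hb)
  · rw [card_insert_of_notMem hvQ, add_mul]
    have h2 := h.card_le
    have h3 := hΔ x
    rw [SimpleGraph.card_neighborFinset_eq_degree] at hcard
    omega

/-- Among the vertices not adjacent to `v` there are many that are pairwise non-adjacent and of
degree at most `t`. -/
lemma exists_independent_non_neighbors {δ t : ℕ} {v : V}
    (hE : #D.edgeFinset + δ + 1 ≤ Fintype.card V)
    (hlarge : #{w | t < D.degree w} ≤ t) (hv : t < D.degree v) :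
    ∃ A : Finset V, δ ≤ #A ∧ (∀ a ∈ A, a ≠ v ∧ ¬ D.Adj v a ∧ D.degree a ≤ t) ∧
      ∀ a ∈ A, ∀ b ∈ A, ¬ D.Adj a b := by
  have hend : ∀ e : Sym2 V, ∃ w ∈ e, ∀ u ∈ e, D.degree u ≤ D.degree w := by
    intro e
    induction e with | _ a b
    rcases le_total (D.degree a) (D.degree b) with hab | hab
    · exact ⟨b, by simp, by simpa using hab⟩
    · exact ⟨a, by simp, by simpa using hab⟩
  choose φ hφ hφmax using hend
  let I : Finset V := (D.edgeFinset \ D.incidenceFinset v).image φ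
  have hI : #I + D.degree v ≤ #D.edgeFinset := by
    have h1 : #I ≤ #(D.edgeFinset \ D.incidenceFinset v) := card_image_le
    have h2 := card_sdiff_add_card_eq_card (D.incidenceFinset_subset v)
    rw [SimpleGraph.card_incidenceFinset_eq_degree] at h2
    omega
  have hmemI : ∀ a b, D.Adj a b → a ≠ v → b ≠ v → φ s(a, b) ∈ I := by
    intro a b hab ha hb
    refine mem_image_of_mem _ (mem_sdiff.2 ⟨by simpa using hab, fun hm => ?_⟩)
    rw [SimpleGraph.mem_incidenceFinset] at hm
    rcases Sym2.mem_iff.1 hm.2 with h | h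
    · exact ha h.symm
    · exact hb h.symm
  have hlargeI : ∀ b, b ≠ v → t < D.degree b → b ∈ I := by
    intro b hbv hb
    obtain ⟨u, hu, hu'⟩ : ∃ u ∈ D.neighborFinset b, u ∉ ({w | t < D.degree w} : Finset V) :=
      exists_mem_notMem_of_card_lt_card (by simpa using hlarge.trans_lt hb)
    simp only [SimpleGraph.mem_neighborFinset] at hu
    simp only [mem_filter, mem_univ, true_and, not_lt] at hu'
    have hφb : φ s(b, u) = b := by
      rcases Sym2.mem_iff.1 (hφ s(b, u)) with h | h
      · exact h
      · have := hφmax s(b, u) b (by simp)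
        rw [h] at this
        omega
    rw [← hφb]
    exact hmemI b u hu hbv fun h => by rw [h] at hu'; omega
  refine ⟨univ \ (insert v (D.neighborFinset v) ∪ I), ?_, ?_, ?_⟩
  · have h1 := card_union_le (insert v (D.neighborFinset v)) I
    have h2 := card_insert_le v (D.neighborFinset v)
    rw [SimpleGraph.card_neighborFinset_eq_degree] at h2
    rw [card_univ_sdiff]
    omega
  · intro a ha
    simp only [mem_sdiff, mem_univ, true_and, mem_union, mem_insert, not_or,
      SimpleGraph.mem_neighborFinset] at ha
    exact ⟨ha.1.1, ha.1.2, not_lt.1 fun h => ha.2 (hlargeI a ha.1.1 h)⟩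
  · intro a ha b hb hab
    simp only [mem_sdiff, mem_univ, true_and, mem_union, mem_insert, not_or] at ha hb
    have := hmemI a b hab ha.1.1 hb.1.1
    rcases Sym2.mem_iff.1 (hφ s(a, b)) with h | h
    · exact ha.2 (h ▸ this)
    · exact hb.2 (h ▸ this)

lemma exists_perm_maps_to {x v : V} {S A : Finset V} (hx : x ∉ S) (hv : v ∉ A) (hcard : #S ≤ #A) :
    ∃ f : Equiv.Perm V, f x = v ∧ ∀ y ∈ S, f y ∈ A := by
  induction S using Finset.induction_on with
  | empty => exact ⟨Equiv.swap x v, by simp⟩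
  | insert y S hy ih =>
    rw [card_insert_of_notMem hy] at hcard
    simp only [mem_insert, not_or] at hx
    obtain ⟨f, hfx, hfS⟩ := ih hx.2 (by omega)
    obtain ⟨w, hwA, hw⟩ : ∃ w ∈ A, w ∉ S.image f :=
      exists_mem_notMem_of_card_lt_card (card_image_le.trans_lt (by omega))
    obtain ⟨g, hgf, hgy⟩ := exists_perm_agree_on f (P := insert x S) (y := y) (w := w)
      (by simp [hy, Ne.symm hx.1]) (by
        simp only [mem_insert, not_or, Equiv.symm_apply_eq, hfx]
        exact ⟨fun h => hv (h ▸ hwA), fun h => hw (mem_image.2 ⟨_, h, by simp⟩)⟩)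
    refine ⟨g, by rw [hgf x (by simp), hfx], fun z hz => ?_⟩
    rcases mem_insert.1 hz with rfl | hz
    · rwa [hgy]
    · rw [hgf z (by simp [hz])]; exact hfS z hz

/-- A vertex of minimum degree of `H` can be placed, with its neighbours, on a vertex of maximum
degree of `D`. -/
lemma exists_closedPacking_singleton {Δ t : ℕ} {v x : V}
    (hE : #D.edgeFinset + H.degree x + 1 ≤ Fintype.card V) (hx : H.degree x ≤ Δ) (hΔ : Δ < t)
    (hlarge : #{w | t < D.degree w} ≤ t) (hv : t < D.degree v)
    (hvmax : ∀ w, D.degree w ≤ D.degree v) :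
    ∃ f P, ClosedPacking D H Δ t {v} f P := by
  obtain ⟨A, hAcard, hA, hAind⟩ := exists_independent_non_neighbors hE hlarge hv
  obtain ⟨f, hfx, hf⟩ := exists_perm_maps_to (x := x) (v := v) (S := H.neighborFinset x) (A := A)
    (by simp) (fun h => (hA v h).1 rfl) (by simpa using hAcard)
  have hP : #(insert x (H.neighborFinset x)) ≤ Δ + 1 :=
    (card_insert_le _ _).trans (by simpa using hx)
  have hsymm : f.symm v = x := by rw [← hfx, Equiv.symm_apply_apply]
  refine ⟨f, insert x (H.neighborFinset x), ⟨?_, ?_, ?_, ?_, ?_⟩, ?_, by simpa using hP,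
    singleton_nonempty v, by simpa using hv, fun u hu w _ => ?_⟩
  · intro a ha b hb hab
    rcases mem_insert.1 ha with rfl | ha' <;> rcases mem_insert.1 hb with rfl | hb'
    · exact (hab.ne rfl).elim
    · rw [hfx]; exact (hA _ (hf b hb')).2.1
    · rw [hfx]; exact fun h => (hA _ (hf a ha')).2.1 h.symm
    · exact hAind _ (hf a ha') _ (hf b hb')
  · simp [hsymm]
  · intro a ha hav
    rcases mem_insert.1 ha with rfl | ha
    · simp [hfx] at hav
    · exact (hA _ (hf a ha)).2.2
  · exact fun u _ => (card_filter_le _ _).trans (hP.trans hΔ)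
  · exact (card_filter_le _ _).trans (hP.trans (by simp [add_comm]))
  · intro u hu b hb
    rw [mem_singleton.1 hu, hsymm] at hb
    exact mem_insert_of_mem (by simpa using hb)
  · rw [mem_singleton.1 hu]; exact hvmax w

lemma ClosedPacking.exists_covering {Δ t : ℕ} {Q P : Finset V} {f : Equiv.Perm V}
    (h : ClosedPacking D H Δ t Q f P)
    (hΔ : ∀ x, H.degree x ≤ Δ) (hΔ1 : 1 ≤ Δ) (hE : #D.edgeFinset < Fintype.card V)
    (hN : 40000 * Δ ^ 2 ≤ Fintype.card V)
    (ht1 : 10 * (Δ * t) ≤ Fintype.card V) (ht2 : 4000 * Δ ≤ t)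
    (ht3 : Fintype.card V < 10 * Δ * (t + 1)) :
    ∃ Q' g P', ClosedPacking D H Δ t Q' g P' ∧ ∀ v, v ∉ Q' → D.degree v ≤ t := by
  induction hm : #Qᶜ using Nat.strong_induction_on generalizing Q P f with
  | _ m ih =>
    by_cases hcov : ∀ v, v ∉ Q → D.degree v ≤ t
    · exact ⟨Q, f, P, h, hcov⟩
    push Not at hcov
    obtain ⟨u, huQ, hu⟩ := hcov
    obtain ⟨v, hv, hvmax⟩ := exists_max_image Qᶜ (fun w => D.degree w) ⟨u, by simpa using huQ⟩
    have hvQ : v ∉ Q := by simpa using hv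
    obtain ⟨g, P', hg⟩ := h.exists_insert hΔ hΔ1 hE hN ht1 ht2 ht3 hvQ
      (hu.trans_le (hvmax u (by simpa using huQ))) fun w hw => hvmax w (by simpa using hw)
    refine ih _ ?_ hg rfl
    rw [← hm]
    exact card_lt_card (compl_ssubset_compl.2 (ssubset_insert hvQ))

/-- A graph `D` with few edges and a graph `H` of small maximum degree pack. -/
theorem exists_perm_packing {Δ : ℕ} {x : V} (hΔ : ∀ y, H.degree y ≤ Δ) (hΔ1 : 1 ≤ Δ)
    (hE : #D.edgeFinset + H.degree x + 1 ≤ Fintype.card V)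
    (hN : 40000 * Δ ^ 2 ≤ Fintype.card V) :
    ∃ f : Equiv.Perm V, ∀ a b, H.Adj a b → ¬ D.Adj (f a) (f b) := by
  obtain ⟨t, ht1, ht2, ht3⟩ : ∃ t, 10 * (Δ * t) ≤ Fintype.card V ∧ 4000 * Δ ≤ t ∧
      Fintype.card V < 10 * Δ * (t + 1) := by
    refine ⟨Fintype.card V / (10 * Δ), ?_, ?_, Nat.lt_mul_div_succ _ (by omega)⟩
    · rw [← mul_assoc]
      exact Nat.mul_div_le _ _
    · rw [Nat.le_div_iff_mul_le (by omega)]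
      calc _ = 40000 * Δ ^ 2 := by ring
        _ ≤ _ := hN
  have hE' : #D.edgeFinset < Fintype.card V := by omega
  have hΔN : Δ ≤ Δ ^ 2 := Nat.le_self_pow two_ne_zero Δ
  obtain ⟨v, -, hvmax⟩ := exists_max_image univ (fun w => D.degree w) ⟨x, mem_univ x⟩
  by_cases hv : D.degree v ≤ t
  · refine exists_perm_conflict_free (P := ∅) (t := t) hΔ ?_ 1 (by simp)
      (fun a _ => (hvmax _ (mem_univ _)).trans hv) fun _ _ b _ => (hvmax _ (mem_univ _)).trans hv
    simp only [card_empty]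
    omega
  have hlarge : #{w | t < D.degree w} ≤ 20 * Δ :=
    card_le_of_lt_degree hE' ht3 fun w hw => (mem_filter.1 hw).2
  obtain ⟨f₀, P₀, h₀⟩ := exists_closedPacking_singleton (t := t) hE (hΔ x) (by omega)
    (by omega) (not_le.1 hv) fun w => hvmax w (mem_univ w)
  obtain ⟨Q, f, P, h, hQ⟩ := h₀.exists_covering hΔ hΔ1 hE' hN ht1 ht2 ht3
  have hP := mul_card_le_of_card_le hΔ1 hN (card_le_of_lt_degree hE' ht3 h.lt_degree) h.card_le
  have hout : ∀ a, a ∉ P → D.degree (f a) ≤ t := fun a ha =>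
    hQ _ fun hm => ha (by simpa using h.packing.symm_mem _ hm)
  refine exists_perm_conflict_free hΔ (by omega) f h.packing.conflict_free hout
    fun a ha b hab => hQ _ fun hm => ha (h.closed _ hm a ?_)
  simpa using hab.symm

end SparseSpanning

theorem dense_graph_contains_sparse_spanning_graph :
    ∃ n₀ : ℕ, ∀ n : ℕ, n₀ ≤ n →
      ∀ (H : SimpleGraph (Fin n)) [DecidableRel H.Adj],
        (∀ v : Fin n, 0 < H.degree v) →
        (H.maxDegree : ℝ) ≤ Real.sqrt n / 200 →
        ∀ G : SimpleGraph (Fin n),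
          (n - 1).choose 2 + H.minDegree ≤ G.edgeSet.ncard →
          ContainsCopy G H := by
  classical
  refine ⟨1, fun n hn H _ hpos hmax G hG => ?_⟩
  have : NeZero n := ⟨by omega⟩
  obtain ⟨x, hx⟩ := H.exists_minimal_degree_vertex
  have hN : 40000 * H.maxDegree ^ 2 ≤ n := by
    have h1 : (200 * (H.maxDegree : ℝ)) ^ 2 ≤ n :=
      (Real.le_sqrt (by positivity) (by positivity)).1 (by linarith)
    have h2 : (40000 * (H.maxDegree : ℝ) ^ 2) ≤ n := by linarith
    exact_mod_cast h2
  have hE : #Gᶜ.edgeFinset + H.degree x + 1 ≤ n := by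
    have h1 : #(G ⊔ Gᶜ).edgeFinset = #G.edgeFinset + #Gᶜ.edgeFinset := by
      rw [SimpleGraph.edgeFinset_sup, card_union_of_disjoint]
      exact SimpleGraph.disjoint_edgeFinset.2 disjoint_compl_right
    have h2 : #(G ⊔ Gᶜ).edgeFinset = n.choose 2 := by
      have htop := SimpleGraph.card_edgeFinset_top_eq_card_choose_two (V := Fin n)
      rw [Fintype.card_fin] at htop
      rw [← htop]
      congr!
      exact sup_compl_eq_top
    have h3 : n.choose 2 = (n - 1) + (n - 1).choose 2 := by
      obtain ⟨m, rfl⟩ := Nat.exists_eq_add_of_le' hn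
      simp [Nat.choose_succ_succ']
    rw [← SimpleGraph.coe_edgeFinset, Set.ncard_coe_finset] at hG
    omega
  obtain ⟨f, hf⟩ := SparseSpanning.exists_perm_packing (D := Gᶜ) (x := x)
    (fun y => H.degree_le_maxDegree y) ((hpos x).trans_le (H.degree_le_maxDegree x))
    (by simpa using hE) (by simpa using hN)
  refine ⟨f, f.injective, fun u v huv => ?_⟩
  by_contra hnot
  exact hf u v huv ((SimpleGraph.compl_adj G _ _).2 ⟨f.injective.ne huv.ne, hnot⟩)
end
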